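/- arXiv:2602.01177 — 4 statements merged into one kernel-verified Lean document; each statement's English description precedes it below -/
import Mathlib

section
/- If a quantum learning algorithm N is γ-stable, i.e., the mutual information I[S𝔗e; WB'] ≤ γ with respect to its output state, and its loss operators satisfy the classical-quantum α-sub-Gaussian property with respect to the product of the marginals, then the expected generalization error satisfies gen(N) ≤ √(2α² γ). -/
open Matrix
open scoped ComplexOrder

variable {d : Type*} [Fintype d] [DecidableEq d]

/-- Apply a real function to a Hermitian matrix via the spectral theorem
(junk value `0` for non-Hermitian matrices). -/
noncomputable def matFun (f : ℝ → ℝ) (A : Matrix d d ℂ) : Matrix d d ℂ :=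
  if hA : A.IsHermitian then
    (hA.eigenvectorUnitary : Matrix d d ℂ) *
      Matrix.diagonal (fun i => (f (hA.eigenvalues i) : ℂ)) *
      (star (hA.eigenvectorUnitary : Matrix d d ℂ))
  else 0

/-- Matrix logarithm (via spectral calculus, with `Real.log 0 = 0` on the kernel). -/
noncomputable def mlog (A : Matrix d d ℂ) : Matrix d d ℂ := matFun Real.log A

/-- Quantum (Umegaki) relative entropy `D(ρ‖σ) = Tr[ρ(log ρ − log σ)]`. -/
noncomputable def qRelEnt (ρ σ : Matrix d d ℂ) : ℝ :=
  (Matrix.trace (ρ * (mlog ρ - mlog σ))).re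

/-- `ρ` is a density operator. -/
def IsDensity (ρ : Matrix d d ℂ) : Prop := ρ.PosSemidef ∧ Matrix.trace ρ = 1

/-- `supp ρ ⊆ supp σ`, stated as `ker σ ⊆ ker ρ`. -/
def SuppLE (ρ σ : Matrix d d ℂ) : Prop := ∀ v : d → ℂ, σ.mulVec v = 0 → ρ.mulVec v = 0

/-- Matrix exponential via spectral calculus. -/
noncomputable def mexp (A : Matrix d d ℂ) : Matrix d d ℂ := matFun Real.exp A


open Filter Topology

lemma aux_tendsto (c x : ℝ) : Tendsto (fun t : ℝ => c / (x + t)) atTop (𝓝 0) :=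
  Tendsto.div_atTop tendsto_const_nhds (tendsto_atTop_add_const_left _ _ tendsto_id)

lemma aux_log_tendsto (r : ℝ) :
    Tendsto (fun t : ℝ => Real.log (r + t) - Real.log t) atTop (𝓝 0) := by
  have h1 : Tendsto (fun t : ℝ => r / (0 + t) + 1) atTop (𝓝 (0 + 1)) :=
    (aux_tendsto r 0).add_const 1
  have h2 := (Real.continuousAt_log (x := 0 + 1) (by norm_num)).tendsto.comp h1
  simp only [zero_add, Real.log_one] at h2
  refine h2.congr' ?_
  filter_upwards [eventually_gt_atTop 0, eventually_gt_atTop (-r)] with t ht htr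
  simp only [Function.comp]
  rw [← Real.log_div (by linarith) ht.ne']
  congr 1
  field_simp

/-- Scalar core: integrate the pointwise resolvent inequality. -/
lemma scalar_core {ι κ : Type*} [Fintype ι] [Fintype κ] (w r : ι → ℝ) (P Q R : κ → ℝ)
    (hr : ∀ i, 0 < r i) (hR : ∀ i, 0 < R i) (hs : ∑ i, w i = ∑ i, P i)
    (h : ∀ t : ℝ, 0 < t → ∑ i, (2 * P i * (1 / (R i + t)) - (Q i + t * P i) * (1 / (R i + t)) ^ 2)
      ≤ ∑ i, w i / (r i + t)) :
    ∑ i, w i * Real.log (r i) ≤ ∑ i, (P i * Real.log (R i) - (P i - Q i / R i)) := by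
  let F : ℝ → ℝ := fun t => ∑ i, w i * Real.log (r i + t) -
    ∑ i, (P i * Real.log (R i + t) - (R i * P i - Q i) / (R i + t))
  have hd : ∀ t : ℝ, 0 ≤ t → HasDerivAt F (∑ i, w i * (1 / (r i + t)) -
      ∑ i, (P i * (1 / (R i + t)) - (0 * (R i + t) - (R i * P i - Q i) * 1) / (R i + t) ^ 2)) t := by
    intro t ht
    refine HasDerivAt.sub (HasDerivAt.fun_sum fun i _ => ?_) (HasDerivAt.fun_sum fun i _ => ?_)
    · exact ((((hasDerivAt_id' t).const_add (r i)).log (by have := hr i; linarith)).const_mul _)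
    · have h1 := (hasDerivAt_id' t).const_add (R i)
      have h0 : R i + t ≠ 0 := by have := hR i; linarith
      exact ((h1.log h0).const_mul _).sub ((hasDerivAt_const t (R i * P i - Q i)).fun_div h1 h0)
  have hmono : MonotoneOn F (Set.Ici 0) := by
    refine monotoneOn_of_deriv_nonneg (convex_Ici 0)
      (fun t ht => (hd t ht).continuousAt.continuousWithinAt)
      (fun t ht => (hd t (interior_subset ht)).differentiableAt.differentiableWithinAt) ?_
    intro t ht
    rw [interior_Ici] at ht
    have ht : 0 < t := ht
    rw [(hd t ht.le).deriv, sub_nonneg]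
    refine le_trans (le_of_eq ?_) ((h t ht).trans (le_of_eq ?_))
    · refine Finset.sum_congr rfl fun i _ => ?_
      have h0 : R i + t ≠ 0 := by have := hR i; linarith
      field_simp
      ring
    · exact Finset.sum_congr rfl fun i _ => by ring
  have hlim : Tendsto F atTop (𝓝 0) := by
    have h1 : Tendsto (fun t : ℝ => ∑ i, w i * (Real.log (r i + t) - Real.log t) -
      ∑ i, (P i * (Real.log (R i + t) - Real.log t) - (R i * P i - Q i) / (R i + t))) atTop
      (𝓝 (∑ i, w i * 0 - ∑ i, (P i * 0 - 0))) :=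
      (tendsto_finsetSum _ fun i _ => (aux_log_tendsto (r i)).const_mul _).sub
        (tendsto_finsetSum _ fun i _ => ((aux_log_tendsto (R i)).const_mul _).sub
          (aux_tendsto _ _))
    simp only [mul_zero, sub_zero, Finset.sum_const_zero] at h1
    refine h1.congr fun t => ?_
    simp only [F, mul_sub, Finset.sum_sub_distrib, ← Finset.sum_mul, hs]
    ring
  have h0 : F 0 ≤ 0 := by
    refine ge_of_tendsto hlim ?_
    filter_upwards [eventually_ge_atTop 0] with t ht
    exact hmono (Set.mem_Ici.2 le_rfl) ht ht
  have h2 : F 0 = ∑ i, w i * Real.log (r i) -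
      ∑ i, (P i * Real.log (R i) - (P i - Q i / R i)) := by
    simp only [F, add_zero]
    congr 1
    refine Finset.sum_congr rfl fun i _ => ?_
    have := (hR i).ne'
    field_simp
  linarith

lemma pair_ineq (p q t : ℝ) (u X : ℂ) (hp : 0 ≤ p) (hq : 0 ≤ q) (ht : 0 < t)
    (hz : q = 0 → p = 0 ∨ u = 0) :
    2 * p * (star u * X).re - (q + t * p) * Complex.normSq X ≤
      p * Complex.normSq u / ((if 0 < p ∧ 0 < q then q / p else 1) + t) := by
  have hX := Complex.normSq_nonneg X
  rcases hp.eq_or_lt with rfl | hp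
  · simp; positivity
  rcases hq.eq_or_lt with rfl | hq
  · rcases hz rfl with h | rfl
    · exact absurd h hp.ne'
    · simp; positivity
  rw [if_pos ⟨hp, hq⟩]
  have hs : 0 < q + t * p := by positivity
  have e : p * Complex.normSq u / (q / p + t) = p ^ 2 * Complex.normSq u / (q + t * p) := by
    field_simp
  rw [e, le_div_iff₀ hs]
  have := Complex.normSq_nonneg ((p : ℂ) * u - ((q + t * p : ℝ) : ℂ) * X)
  simp only [Complex.normSq_apply, Complex.sub_re, Complex.sub_im, Complex.mul_re, Complex.mul_im,
    Complex.ofReal_re, Complex.ofReal_im, Complex.star_def, Complex.conj_re, Complex.conj_im] at this ⊢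
  nlinarith [this]

lemma conj_diag_re (A : Matrix d d ℂ) (x : d → ℝ) (a : d) :
    ((Aᴴ * Matrix.diagonal (fun i => (x i : ℂ)) * A) a a).re =
      ∑ i, x i * Complex.normSq (A i a) := by
  rw [Matrix.mul_apply, Complex.re_sum]
  refine Finset.sum_congr rfl fun i _ => ?_
  rw [Matrix.mul_diagonal, Matrix.conjTranspose_apply, Complex.normSq_apply]
  simp
  ring

lemma gram_sum (A : Matrix d d ℂ) (a : d) :
    ((Aᴴ * A) a a).re = ∑ i, Complex.normSq (A i a) := by
  have := conj_diag_re A (fun _ => 1) a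
  simpa using this

lemma unitary_core (A B : Matrix d d ℂ) (hA : Aᴴ * A = 1) (hB : Bᴴ * B = 1)
    (p q : d → ℝ) (hp : ∀ a, 0 ≤ p a) (hq : ∀ b, 0 ≤ q b)
    (hz : ∀ a b, q b = 0 → p a = 0 ∨ (Bᴴ * A) b a = 0) (x : d → ℝ) (t : ℝ) (ht : 0 < t) :
    ∑ i, (2 * (∑ a, p a * Complex.normSq (A i a)) * x i -
      ((∑ b, q b * Complex.normSq (B i b)) + t * ∑ a, p a * Complex.normSq (A i a)) * x i ^ 2) ≤
    ∑ ab : d × d, p ab.1 * Complex.normSq ((Bᴴ * A) ab.2 ab.1) /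
      ((if 0 < p ab.1 ∧ 0 < q ab.2 then q ab.2 / p ab.1 else 1) + t) := by
  have hA' : A * Aᴴ = 1 := mul_eq_one_comm.1 hA
  have hB' : B * Bᴴ = 1 := mul_eq_one_comm.1 hB
  set D : Matrix d d ℂ := Matrix.diagonal (fun i => (x i : ℂ)) with hD
  have hDD : D * D = Matrix.diagonal (fun i => ((x i ^ 2 : ℝ) : ℂ)) := by
    rw [hD, Matrix.diagonal_mul_diagonal]; congr 1; ext i; push_cast; ring
  have hDH : Dᴴ = D := by
    rw [hD, Matrix.diagonal_conjTranspose]; congr 1; ext i; simp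
  set X := Bᴴ * D * A with hX
  have e1 : ∀ a, ∑ b, (star ((Bᴴ * A) b a) * X b a).re = ∑ i, x i * Complex.normSq (A i a) := by
    intro a
    rw [← conj_diag_re, ← hD]
    have : Aᴴ * D * A = (Bᴴ * A)ᴴ * X := by
      rw [hX, Matrix.conjTranspose_mul, Matrix.conjTranspose_conjTranspose]
      calc Aᴴ * D * A = Aᴴ * (1 : Matrix d d ℂ) * D * A := by rw [Matrix.mul_one]
        _ = _ := by rw [← hB']; simp only [Matrix.mul_assoc]
    rw [this, Matrix.mul_apply, Complex.re_sum]
    rfl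
  have e2 : ∀ a, ∑ b, Complex.normSq (X b a) = ∑ i, x i ^ 2 * Complex.normSq (A i a) := by
    intro a
    rw [← gram_sum, ← conj_diag_re, ← hDD]
    congr 2
    rw [hX, Matrix.conjTranspose_mul, Matrix.conjTranspose_mul, Matrix.conjTranspose_conjTranspose,
      hDH]
    refine congrFun (congrFun ?_ _) _
    calc _ = Aᴴ * D * (B * Bᴴ) * D * A := by simp only [Matrix.mul_assoc]
      _ = _ := by rw [hB']; simp only [Matrix.mul_assoc, Matrix.one_mul]
  have e3 : ∀ b, ∑ a, Complex.normSq (X b a) = ∑ i, x i ^ 2 * Complex.normSq (B i b) := by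
    intro b
    have : ∑ a, Complex.normSq (X b a) = ∑ a, Complex.normSq (Xᴴ a b) :=
      Finset.sum_congr rfl fun a _ => by simp [Matrix.conjTranspose_apply]
    rw [this, ← gram_sum, ← conj_diag_re, ← hDD, Matrix.conjTranspose_conjTranspose]
    congr 2
    rw [hX, Matrix.conjTranspose_mul, Matrix.conjTranspose_mul, Matrix.conjTranspose_conjTranspose,
      hDH]
    refine congrFun (congrFun ?_ _) _
    calc _ = Bᴴ * D * (A * Aᴴ) * D * B := by simp only [Matrix.mul_assoc]
      _ = _ := by rw [hA']; simp only [Matrix.mul_assoc, Matrix.one_mul]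
  refine le_trans (le_of_eq ?_) (Finset.sum_le_sum fun ab _ =>
    pair_ineq (p ab.1) (q ab.2) t ((Bᴴ * A) ab.2 ab.1) (X ab.2 ab.1) (hp _) (hq _) ht (hz _ _))
  have s1 : ∑ ab : d × d, 2 * p ab.1 * (star ((Bᴴ * A) ab.2 ab.1) * X ab.2 ab.1).re =
      ∑ i, 2 * (∑ a, p a * Complex.normSq (A i a)) * x i := by
    rw [Fintype.sum_prod_type]
    simp only [← Finset.mul_sum, e1]
    simp only [Finset.mul_sum, Finset.sum_mul]
    rw [Finset.sum_comm]
    exact Finset.sum_congr rfl fun _ _ => Finset.sum_congr rfl fun _ _ => by ring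
  have s2 : ∑ ab : d × d, t * p ab.1 * Complex.normSq (X ab.2 ab.1) =
      ∑ i, t * (∑ a, p a * Complex.normSq (A i a)) * x i ^ 2 := by
    rw [Fintype.sum_prod_type]
    simp only [← Finset.mul_sum, e2]
    simp only [Finset.mul_sum, Finset.sum_mul]
    rw [Finset.sum_comm]
    exact Finset.sum_congr rfl fun _ _ => Finset.sum_congr rfl fun _ _ => by ring
  have s3 : ∑ ab : d × d, q ab.2 * Complex.normSq (X ab.2 ab.1) =
      ∑ i, (∑ b, q b * Complex.normSq (B i b)) * x i ^ 2 := by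
    rw [Fintype.sum_prod_type_right]
    simp only [← Finset.mul_sum, e3]
    simp only [Finset.mul_sum, Finset.sum_mul]
    rw [Finset.sum_comm]
    exact Finset.sum_congr rfl fun _ _ => Finset.sum_congr rfl fun _ _ => by ring
  simp only [add_mul, Finset.sum_sub_distrib, Finset.sum_add_distrib, s1, s2, s3]

lemma trace_two (U V : Matrix d d ℂ) (f g : d → ℝ) :
    (Matrix.trace ((U * Matrix.diagonal (fun i => (f i : ℂ)) * star U) *
      (V * Matrix.diagonal (fun i => (g i : ℂ)) * star V))).re =
    ∑ i, f i * ∑ a, g a * Complex.normSq ((Uᴴ * V) i a) := by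
  have h1 : Matrix.trace ((U * Matrix.diagonal (fun i => (f i : ℂ)) * star U) *
      (V * Matrix.diagonal (fun i => (g i : ℂ)) * star V)) =
      Matrix.trace (((Uᴴ * V)ᴴ * Matrix.diagonal (fun i => (f i : ℂ)) * (Uᴴ * V)) *
        Matrix.diagonal (fun i => (g i : ℂ))) := by
    rw [← Matrix.mul_assoc, Matrix.trace_mul_comm]
    simp only [Matrix.star_eq_conjTranspose, Matrix.conjTranspose_mul,
      Matrix.conjTranspose_conjTranspose, Matrix.mul_assoc]
  rw [h1, Matrix.trace, Complex.re_sum]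
  have h2 : ∀ a, (Matrix.diag (((Uᴴ * V)ᴴ * Matrix.diagonal (fun i => (f i : ℂ)) * (Uᴴ * V)) *
        Matrix.diagonal (fun i => (g i : ℂ))) a).re =
      (∑ i, f i * Complex.normSq ((Uᴴ * V) i a)) * g a := by
    intro a
    rw [Matrix.diag_apply, Matrix.mul_diagonal, Complex.re_mul_ofReal, conj_diag_re]
  simp only [h2, Finset.mul_sum, Finset.sum_mul]
  rw [Finset.sum_comm]
  exact Finset.sum_congr rfl fun _ _ => Finset.sum_congr rfl fun _ _ => by ring

lemma herm_eq {A : Matrix d d ℂ} (hA : A.IsHermitian) :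
    A = (hA.eigenvectorUnitary : Matrix d d ℂ) *
      Matrix.diagonal (fun i => (hA.eigenvalues i : ℂ)) *
      (star (hA.eigenvectorUnitary : Matrix d d ℂ)) := by
  conv_lhs => rw [hA.spectral_theorem]
  rfl

lemma matFun_eq {A : Matrix d d ℂ} (hA : A.IsHermitian) (f : ℝ → ℝ) :
    matFun f A = (hA.eigenvectorUnitary : Matrix d d ℂ) *
      Matrix.diagonal (fun i => (f (hA.eigenvalues i) : ℂ)) *
      (star (hA.eigenvectorUnitary : Matrix d d ℂ)) := by
  rw [matFun, dif_pos hA]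

lemma variational (ρ σ K : Matrix d d ℂ) (hρ : IsDensity ρ) (hσ : IsDensity σ)
    (hsupp : SuppLE ρ σ) (hK : K.IsHermitian) (s : ℝ)
    (h : (Matrix.trace (mexp K * σ)).re ≤ Real.exp s) :
    (Matrix.trace (K * ρ)).re ≤ qRelEnt ρ σ + s := by
  have hρH := hρ.1.isHermitian
  have hσH := hσ.1.isHermitian
  set U : Matrix d d ℂ := (hρH.eigenvectorUnitary : Matrix d d ℂ) with hU
  set V : Matrix d d ℂ := (hσH.eigenvectorUnitary : Matrix d d ℂ) with hV
  set W : Matrix d d ℂ := (hK.eigenvectorUnitary : Matrix d d ℂ) with hW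
  set p := hρH.eigenvalues with hpdef
  set q := hσH.eigenvalues with hqdef
  set k := hK.eigenvalues with hkdef
  have hUU : Uᴴ * U = 1 := Unitary.coe_star_mul_self hρH.eigenvectorUnitary
  have hVV : Vᴴ * V = 1 := Unitary.coe_star_mul_self hσH.eigenvectorUnitary
  have hWW : W * Wᴴ = 1 := Unitary.coe_mul_star_self hK.eigenvectorUnitary
  have hVV' : V * Vᴴ = 1 := mul_eq_one_comm.1 hVV
  have hρe : ρ = U * Matrix.diagonal (fun i => (p i : ℂ)) * star U := herm_eq hρH
  have hσe : σ = V * Matrix.diagonal (fun i => (q i : ℂ)) * star V := herm_eq hσH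
  have hKe : K = W * Matrix.diagonal (fun i => (k i : ℂ)) * star W := herm_eq hK
  have hp : ∀ a, 0 ≤ p a := hρ.1.eigenvalues_nonneg
  have hq : ∀ a, 0 ≤ q a := hσ.1.eigenvalues_nonneg
  have key : ∀ Y : Matrix d d ℂ, Yᴴ * Y = 1 → (Wᴴ * Y)ᴴ * (Wᴴ * Y) = 1 := by
    intro Y hY
    rw [Matrix.conjTranspose_mul, Matrix.conjTranspose_conjTranspose]
    calc _ = Yᴴ * (W * Wᴴ) * Y := by simp only [Matrix.mul_assoc]
      _ = 1 := by rw [hWW, Matrix.mul_one, hY]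
  set A := Wᴴ * U with hAdef
  set B := Wᴴ * V with hBdef
  have hA := key U hUU
  have hB := key V hVV
  rw [← hAdef] at hA
  rw [← hBdef] at hB
  have hBA : Bᴴ * A = Vᴴ * U := by
    rw [hAdef, hBdef, Matrix.conjTranspose_mul, Matrix.conjTranspose_conjTranspose]
    calc _ = Vᴴ * (W * Wᴴ) * U := by simp only [Matrix.mul_assoc]
      _ = _ := by rw [hWW, Matrix.mul_one]
  have colA : ∀ a, ∑ i, Complex.normSq (A i a) = 1 := by
    intro a; rw [← gram_sum, hA]; simp
  have colM : ∀ a, ∑ i, Complex.normSq ((Vᴴ * U) i a) = 1 := by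
    intro a
    rw [← gram_sum, Matrix.conjTranspose_mul, Matrix.conjTranspose_conjTranspose]
    have : Uᴴ * V * (Vᴴ * U) = 1 := by
      calc _ = Uᴴ * (V * Vᴴ) * U := by simp only [Matrix.mul_assoc]
        _ = 1 := by rw [hVV', Matrix.mul_one, hUU]
    rw [this]; simp
  have hsum : ∑ a, p a = 1 := by
    have h1 := hρH.trace_eq_sum_eigenvalues
    rw [hρ.2] at h1
    have h2 := congrArg Complex.re h1
    simpa using h2.symm
  -- support condition
  have hz : ∀ a b, q b = 0 → p a = 0 ∨ (Bᴴ * A) b a = 0 := by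
    intro a b hb
    rw [hBA]
    have hσV : σ *ᵥ (fun i => V i b) = 0 := by
      have h1 : σ * V = V * Matrix.diagonal (fun i => (q i : ℂ)) := by
        conv_lhs => rw [hσe]
        rw [Matrix.mul_assoc, Matrix.star_eq_conjTranspose, hVV, Matrix.mul_one]
      ext j
      have h2 := congrFun (congrFun h1 j) b
      rw [Matrix.mul_diagonal, hb] at h2
      simpa [Matrix.mul_apply, Matrix.mulVec, dotProduct] using h2
    have hρV := hsupp _ hσV
    have h3 : (Vᴴ * ρ) b = 0 := by
      ext j
      have h4 := congrArg star (congrFun hρV j)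
      have h5 : star ((ρ *ᵥ (fun i => V i b)) j) = (Vᴴ * ρ) b j := by
        have : (ρ *ᵥ (fun i => V i b)) j = (ρ * V) j b := rfl
        rw [this, ← Matrix.conjTranspose_apply, Matrix.conjTranspose_mul, hρH.eq]
      rw [h5] at h4
      simpa using h4
    have h6 : Vᴴ * ρ * U = (Vᴴ * U) * Matrix.diagonal (fun i => (p i : ℂ)) := by
      conv_lhs => rw [hρe]
      calc _ = Vᴴ * U * Matrix.diagonal (fun i => (p i : ℂ)) * (Uᴴ * U) := by
            simp only [Matrix.mul_assoc, Matrix.star_eq_conjTranspose]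
        _ = _ := by rw [hUU, Matrix.mul_one]
    have h7 := congrFun (congrFun h6 b) a
    rw [Matrix.mul_diagonal, Matrix.mul_apply] at h7
    simp only [h3, Pi.zero_apply, zero_mul, Finset.sum_const_zero] at h7
    rcases mul_eq_zero.1 h7.symm with h8 | h8
    · exact Or.inr h8
    · exact Or.inl (by exact_mod_cast h8)
  -- trace formulas
  have tK : (Matrix.trace (K * ρ)).re = ∑ i, k i * ∑ a, p a * Complex.normSq (A i a) := by
    rw [hρe, hKe]; exact trace_two W U k p
  have tE : (Matrix.trace (mexp K * σ)).re =
      ∑ i, Real.exp (k i) * ∑ b, q b * Complex.normSq (B i b) := by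
    rw [mexp, matFun_eq hK]
    conv_lhs => rw [hσe]
    exact trace_two W V (fun i => Real.exp (k i)) q
  have tD : qRelEnt ρ σ = ∑ a, ∑ b, p a * Complex.normSq ((Vᴴ * U) b a) *
      (Real.log (p a) - Real.log (q b)) := by
    have t1 : (Matrix.trace (mlog ρ * ρ)).re = ∑ a, p a * Real.log (p a) := by
      have h1 : mlog ρ = U * Matrix.diagonal (fun i => (Real.log (p i) : ℂ)) * star U :=
        matFun_eq hρH Real.log
      rw [h1]
      generalize hX : U * Matrix.diagonal (fun i => (Real.log (p i) : ℂ)) * star U = X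
      have h2 : (Matrix.trace (X * ρ)).re = (Matrix.trace (X *
          (U * Matrix.diagonal (fun i => (p i : ℂ)) * star U))).re := congrArg
            (fun Y => (Matrix.trace (X * Y)).re) hρe
      rw [h2, ← hX]
      refine (trace_two U U (fun i => Real.log (p i)) p).trans ?_
      rw [hUU]
      refine Finset.sum_congr rfl fun i _ => ?_
      rw [Finset.sum_eq_single i]
      · simp [mul_comm]
      · intro b _ hb; simp [Matrix.one_apply_ne hb.symm]
      · simp
    have t2 : (Matrix.trace (mlog σ * ρ)).re =
        ∑ b, Real.log (q b) * ∑ a, p a * Complex.normSq ((Vᴴ * U) b a) := by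
      rw [mlog, matFun_eq hσH]
      conv_lhs => rw [hρe]
      exact trace_two V U (fun i => Real.log (q i)) p
    rw [qRelEnt, Matrix.trace_mul_comm, Matrix.sub_mul, Matrix.trace_sub, Complex.sub_re, t1, t2]
    simp only [mul_sub, Finset.sum_sub_distrib]
    congr 1
    · refine Finset.sum_congr rfl fun a _ => ?_
      rw [← Finset.sum_mul, ← Finset.mul_sum, colM, mul_one]
    · simp only [Finset.mul_sum]
      rw [Finset.sum_comm]
      exact Finset.sum_congr rfl fun _ _ => Finset.sum_congr rfl fun _ _ => by ring
  have hP : ∑ i, ∑ a, p a * Complex.normSq (A i a) = 1 := by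
    rw [Finset.sum_comm, ← hsum]
    exact Finset.sum_congr rfl fun a _ => by rw [← Finset.mul_sum, colA, mul_one]
  have hM : ∑ ab : d × d, p ab.1 * Complex.normSq ((Bᴴ * A) ab.2 ab.1) = 1 := by
    rw [Fintype.sum_prod_type, ← hsum, hBA]
    exact Finset.sum_congr rfl fun a _ => by
      show ∑ b, p a * Complex.normSq ((Vᴴ * U) b a) = p a
      rw [← Finset.mul_sum, colM, mul_one]
  have main := scalar_core
    (fun ab : d × d => p ab.1 * Complex.normSq ((Bᴴ * A) ab.2 ab.1))
    (fun ab => if 0 < p ab.1 ∧ 0 < q ab.2 then q ab.2 / p ab.1 else 1)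
    (fun i => ∑ a, p a * Complex.normSq (A i a))
    (fun i => ∑ b, q b * Complex.normSq (B i b))
    (fun i => Real.exp (s - k i))
    (fun ab => by
      show 0 < if 0 < p ab.1 ∧ 0 < q ab.2 then q ab.2 / p ab.1 else 1
      split_ifs with hh
      · exact div_pos hh.2 hh.1
      · exact one_pos)
    (fun i => Real.exp_pos _) (hM.trans hP.symm)
    (fun t ht => unitary_core A B hA hB p q hp hq hz _ t ht)
  have hl : ∑ ab : d × d, p ab.1 * Complex.normSq ((Bᴴ * A) ab.2 ab.1) *
      Real.log (if 0 < p ab.1 ∧ 0 < q ab.2 then q ab.2 / p ab.1 else 1) = - qRelEnt ρ σ := by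
    rw [tD, Fintype.sum_prod_type, ← Finset.sum_neg_distrib]
    refine Finset.sum_congr rfl fun a _ => ?_
    rw [← Finset.sum_neg_distrib]
    refine Finset.sum_congr rfl fun b _ => ?_
    have hz' := hz a b
    rw [hBA] at hz' ⊢
    show p a * Complex.normSq ((Vᴴ * U) b a) *
      Real.log (if 0 < p a ∧ 0 < q b then q b / p a else 1) = _
    rcases (hp a).eq_or_lt with h1 | h1
    · simp [← h1]
    rcases (hq b).eq_or_lt with h2 | h2
    · rcases hz' h2.symm with h3 | h3
      · exact absurd h3 h1.ne'
      · simp [h3]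
    rw [if_pos ⟨h1, h2⟩, Real.log_div h2.ne' h1.ne']
    ring
  rw [hl] at main
  have hr : ∑ i, ((∑ a, p a * Complex.normSq (A i a)) * Real.log (Real.exp (s - k i)) -
      ((∑ a, p a * Complex.normSq (A i a)) -
        (∑ b, q b * Complex.normSq (B i b)) / Real.exp (s - k i))) =
      s - (Matrix.trace (K * ρ)).re - (1 - (Matrix.trace (mexp K * σ)).re / Real.exp s) := by
    have h1 : ∑ i, (∑ b, q b * Complex.normSq (B i b)) / Real.exp (s - k i) =
        (Matrix.trace (mexp K * σ)).re / Real.exp s := by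
      rw [tE, Finset.sum_div]
      refine Finset.sum_congr rfl fun i _ => ?_
      rw [Real.exp_sub]
      have := Real.exp_pos s
      have := Real.exp_pos (k i)
      field_simp
    rw [Finset.sum_sub_distrib, Finset.sum_sub_distrib, h1, hP, tK]
    simp only [Real.log_exp, mul_sub, Finset.sum_sub_distrib, ← Finset.sum_mul, hP]
    rw [one_mul]
    congr 2
    exact Finset.sum_congr rfl fun i _ => by ring
  rw [hr] at main
  have h9 : (Matrix.trace (mexp K * σ)).re / Real.exp s ≤ 1 :=
    (div_le_one (Real.exp_pos s)).2 h
  linarith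

/-- If a quantum learning algorithm is `γ`-stable, i.e. the mutual
information `I[S𝔗e;WB'] = D(σ_joint ‖ σ_prod)` between the data and the output is at most
`γ`, and the global loss observable `L` is classical-quantum `α`-sub-Gaussian with respect
to the product of the marginals `σ_prod`, then the expected generalization error
`|Tr[L σ_joint] − Tr[L σ_prod]|` is at most `√(2 α² γ)`. -/
theorem stability_implies_generalization
    (σjoint σprod L : Matrix d d ℂ) (α γ : ℝ) (hα : 0 < α) (hγ : 0 ≤ γ)
    (hjoint : IsDensity σjoint) (hprod : IsDensity σprod)
    (hsupp : SuppLE σjoint σprod)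
    (hL : L.IsHermitian)
    -- `γ`-stability: the mutual information is at most `γ`
    (hstable : qRelEnt σjoint σprod ≤ γ)
    -- classical-quantum `α`-sub-Gaussianity of the loss w.r.t. the product of marginals
    (hSG : ∀ lam : ℝ,
      (Matrix.trace (mexp (lam • (L - (Matrix.trace (L * σprod)).re • (1 : Matrix d d ℂ)))
          * σprod)).re ≤ Real.exp (lam ^ 2 * α ^ 2 / 2)) :
    |(Matrix.trace (L * σjoint)).re - (Matrix.trace (L * σprod)).re| ≤
      Real.sqrt (2 * α ^ 2 * γ) := by
  have hall : ∀ lam : ℝ, lam * ((Matrix.trace (L * σjoint)).re - (Matrix.trace (L * σprod)).re) ≤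
      γ + lam ^ 2 * α ^ 2 / 2 := by
    intro lam
    set c := (Matrix.trace (L * σprod)).re with hc
    have hK : (lam • (L - c • (1 : Matrix d d ℂ))).IsHermitian := by
      unfold Matrix.IsHermitian
      rw [Matrix.conjTranspose_smul, Matrix.conjTranspose_sub, Matrix.conjTranspose_smul, hL.eq]
      simp
    have h1 := variational σjoint σprod _ hjoint hprod hsupp hK _ (hSG lam)
    have h2 : (Matrix.trace ((lam • (L - c • (1 : Matrix d d ℂ))) * σjoint)).re =
        lam * ((Matrix.trace (L * σjoint)).re - c) := by
      rw [Matrix.smul_mul, Matrix.trace_smul, Matrix.sub_mul, Matrix.smul_mul, Matrix.one_mul,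
        Matrix.trace_sub, Matrix.trace_smul, hjoint.2]
      simp
    linarith
  apply Real.abs_le_sqrt
  set Δ := (Matrix.trace (L * σjoint)).re - (Matrix.trace (L * σprod)).re
  have h := hall (Δ / α ^ 2)
  have hα2 : 0 < α ^ 2 := by positivity
  have e : Δ / α ^ 2 * Δ - (Δ / α ^ 2) ^ 2 * α ^ 2 / 2 = Δ ^ 2 / (2 * α ^ 2) := by
    field_simp
    ring
  have h3 : Δ ^ 2 / (2 * α ^ 2) ≤ γ := by linarith
  rw [div_le_iff₀ (by positivity)] at h3
  linarith
end

section
/- Variational lower bound for quantum relative entropy: for density operators ρ, σ with supp(ρ) ⊆ supp(σ) and any Hermitian operator H, D(ρ‖σ) ≥ Tr[Hρ] − ln Tr[e^H σ]. -/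
open Matrix
open scoped ComplexOrder

variable {d : Type*} [Fintype d] [DecidableEq d]

lemma qre_trace_aux (U V : Matrix d d ℂ) (f g : d → ℝ) :
    (Matrix.trace ((U * Matrix.diagonal (fun i => (f i : ℂ)) * star U) *
      (V * Matrix.diagonal (fun i => (g i : ℂ)) * star V))).re
      = ∑ i, ∑ j, f i * g j * Complex.normSq ((star U * V) i j) := by
  have h1 : Matrix.trace ((U * Matrix.diagonal (fun i => (f i : ℂ)) * star U) *
      (V * Matrix.diagonal (fun i => (g i : ℂ)) * star V))
      = Matrix.trace ((Matrix.diagonal (fun i => (f i : ℂ)) * (star U * V)) *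
      (Matrix.diagonal (fun i => (g i : ℂ)) * star (star U * V))) := by
    rw [star_mul, star_star]
    simp only [Matrix.mul_assoc]
    rw [Matrix.trace_mul_comm]
    simp only [Matrix.mul_assoc]
  rw [h1]
  generalize star U * V = M
  simp only [Matrix.trace, Matrix.diag, Matrix.mul_apply (M := _ * M), Matrix.diagonal_mul,
    Complex.re_sum]
  refine Finset.sum_congr rfl fun i _ => Finset.sum_congr rfl fun j _ => ?_
  rw [Matrix.star_apply]
  simp [Complex.normSq_apply]
  ring

lemma qre_normSq_left (A Y : Matrix d d ℂ) (hA : star A * A = 1) (j : d) :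
    ∑ i, Complex.normSq ((A * Y) i j) = ∑ i, Complex.normSq (Y i j) := by
  have key : ∀ Z : Matrix d d ℂ,
      ((∑ i, Complex.normSq (Z i j) : ℝ) : ℂ) = (star Z * Z) j j := by
    intro Z
    rw [Matrix.mul_apply]
    push_cast
    refine Finset.sum_congr rfl fun i _ => ?_
    rw [Matrix.star_apply, Complex.normSq_eq_conj_mul_self]; rfl
  have : (((∑ i, Complex.normSq ((A * Y) i j) : ℝ)) : ℂ)
      = ((∑ i, Complex.normSq (Y i j) : ℝ) : ℂ) := by
    rw [key, key, star_mul, Matrix.mul_assoc, ← Matrix.mul_assoc (star A), hA, Matrix.one_mul]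
  exact_mod_cast this

lemma qre_normSq_right (B Y : Matrix d d ℂ) (hB : B * star B = 1) (i : d) :
    ∑ j, Complex.normSq ((Y * B) i j) = ∑ j, Complex.normSq (Y i j) := by
  have key : ∀ Z : Matrix d d ℂ,
      ((∑ j, Complex.normSq (Z i j) : ℝ) : ℂ) = (Z * star Z) i i := by
    intro Z
    rw [Matrix.mul_apply]
    push_cast
    refine Finset.sum_congr rfl fun i _ => ?_
    rw [Matrix.star_apply, mul_comm, Complex.normSq_eq_conj_mul_self]; rfl
  have : (((∑ j, Complex.normSq ((Y * B) i j) : ℝ)) : ℂ)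
      = ((∑ j, Complex.normSq (Y i j) : ℝ) : ℂ) := by
    rw [key, key, star_mul, Matrix.mul_assoc, ← Matrix.mul_assoc B, hB, Matrix.one_mul]
  exact_mod_cast this

lemma qre_cross (A B : Matrix d d ℂ) (hB : B * star B = 1) (f : d → ℝ) (i : d) :
    ∑ j, (star ((A * B) i j) * (A * Matrix.diagonal (fun k => (f k : ℂ)) * B) i j).re
      = ∑ k, f k * Complex.normSq (A i k) := by
  rw [← Complex.re_sum]
  have : ∑ j, (star ((A * B) i j) * (A * Matrix.diagonal (fun k => (f k : ℂ)) * B) i j)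
      = ((A * Matrix.diagonal (fun k => (f k : ℂ)) * B) * star (A * B)) i i := by
    rw [Matrix.mul_apply]
    exact Finset.sum_congr rfl fun j _ => by rw [Matrix.star_apply, mul_comm]
  rw [this, star_mul, Matrix.mul_assoc, ← Matrix.mul_assoc B, hB, Matrix.one_mul,
    Matrix.mul_apply, Complex.re_sum]
  refine Finset.sum_congr rfl fun k _ => ?_
  rw [Matrix.mul_diagonal, Matrix.star_apply]
  simp [Complex.normSq_apply]
  ring

lemma qre_scalar (p q t : ℝ) (hq : 0 ≤ q) (hp : 0 ≤ p) (ht : 0 < t) (m x : ℂ)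
    (h0 : p ≠ 0 → m ≠ 0 → q ≠ 0) :
    2 * (p * (star m * x).re) - (q * Complex.normSq x + t * (p * Complex.normSq x))
      ≤ Complex.normSq m * p * (p / (q + t * p)) := by
  rcases hp.eq_or_lt with rfl | hp'
  · have := mul_nonneg hq (Complex.normSq_nonneg x)
    simp; exact this
  have hs : 0 < q + t * p := by positivity
  have h1 : (star m * x).re = m.re * x.re + m.im * x.im := by simp
  rw [h1, Complex.normSq_apply, Complex.normSq_apply, ← mul_div_assoc, le_div_iff₀ hs]
  nlinarith [sq_nonneg ((q + t * p) * x.re - p * m.re), sq_nonneg ((q + t * p) * x.im - p * m.im)]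

lemma qre_pointwise (A B : Matrix d d ℂ) (hA : star A * A = 1) (hB : B * star B = 1)
    (p q f : d → ℝ) (hp : ∀ i, 0 ≤ p i) (hq : ∀ i, 0 ≤ q i) (t : ℝ) (ht : 0 < t)
    (h0 : ∀ i j, p i ≠ 0 → (A * B) i j ≠ 0 → q j ≠ 0) :
    ∑ k, (2 * ((∑ i, p i * Complex.normSq (A i k)) * f k)
        - f k ^ 2 * ((∑ j, q j * Complex.normSq (B k j))
          + t * ∑ i, p i * Complex.normSq (A i k)))
      ≤ ∑ i, ∑ j, Complex.normSq ((A * B) i j) * p i * (p i / (q j + t * p i)) := by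
  set X := A * Matrix.diagonal (fun k => (f k : ℂ)) * B with hX
  have e1 : ∑ i, ∑ j, p i * (star ((A * B) i j) * X i j).re
      = ∑ k, (∑ i, p i * Complex.normSq (A i k)) * f k := by
    simp_rw [← Finset.mul_sum, hX, qre_cross A B hB f, Finset.mul_sum, Finset.sum_mul]
    rw [Finset.sum_comm]
    exact Finset.sum_congr rfl fun k _ => Finset.sum_congr rfl fun i _ => by ring
  have e2 : ∑ i, ∑ j, q j * Complex.normSq (X i j)
      = ∑ k, f k ^ 2 * ∑ j, q j * Complex.normSq (B k j) := by
    rw [Finset.sum_comm]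
    simp_rw [← Finset.mul_sum, hX, Matrix.mul_assoc, qre_normSq_left A _ hA,
      Matrix.diagonal_mul, Complex.normSq_mul, Complex.normSq_ofReal, Finset.mul_sum]
    rw [Finset.sum_comm]
    exact Finset.sum_congr rfl fun k _ => Finset.sum_congr rfl fun i _ => by ring
  have e3 : ∑ i, ∑ j, p i * Complex.normSq (X i j)
      = ∑ k, f k ^ 2 * ∑ i, p i * Complex.normSq (A i k) := by
    simp_rw [← Finset.mul_sum, hX, qre_normSq_right B _ hB,
      Matrix.mul_diagonal, Complex.normSq_mul, Complex.normSq_ofReal, Finset.mul_sum]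
    rw [Finset.sum_comm]
    exact Finset.sum_congr rfl fun k _ => Finset.sum_congr rfl fun i _ => by ring
  have e : ∑ k, (2 * ((∑ i, p i * Complex.normSq (A i k)) * f k)
        - f k ^ 2 * ((∑ j, q j * Complex.normSq (B k j))
          + t * ∑ i, p i * Complex.normSq (A i k)))
      = ∑ i, ∑ j, (2 * (p i * (star ((A * B) i j) * X i j).re)
        - (q j * Complex.normSq (X i j) + t * (p i * Complex.normSq (X i j)))) := by
    simp only [Finset.sum_sub_distrib, Finset.sum_add_distrib, ← Finset.mul_sum]
    simp only [Finset.mul_sum] at e1 e2 e3 ⊢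
    simp only [← Finset.mul_sum] at e1 e2 e3 ⊢
    rw [e1, e2, e3]
    simp only [mul_add, Finset.sum_add_distrib]
    congr 2
    rw [Finset.mul_sum]
    exact Finset.sum_congr rfl fun k _ => by ring
  rw [e]
  exact Finset.sum_le_sum fun i _ => Finset.sum_le_sum fun j _ =>
    qre_scalar _ _ _ (hq j) (hp i) ht _ _ (h0 i j)

open Filter Topology in
lemma qre_integrated (w : d → d → ℝ) (p q P Q a : d → ℝ)
    (hp : ∀ i, 0 ≤ p i) (hq : ∀ i, 0 ≤ q i) (ha : ∀ k, 0 < a k)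
    (h0 : ∀ i j, w i j * p i ≠ 0 → q j ≠ 0)
    (hw : ∑ i, ∑ j, w i j * p i = 1) (hP : ∑ k, P k = 1)
    (hpt : ∀ t : ℝ, 0 < t → ∀ f : d → ℝ,
      ∑ k, (2 * (P k * f k) - f k ^ 2 * (Q k + t * P k))
        ≤ ∑ i, ∑ j, w i j * p i * (p i / (q j + t * p i))) :
    0 ≤ ∑ i, ∑ j, w i j * p i * (Real.log (p i) - Real.log (q j))
      + ∑ k, (P k * Real.log (a k) - (P k - Q k / a k)) := by
  let F : ℝ → ℝ := fun T =>
    ∑ i, ∑ j, w i j * p i * (Real.log (q j + T * p i) - Real.log (q j))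
      - ∑ k, (P k * (Real.log (a k + T) - Real.log (a k))
        + (P k * a k - Q k) * ((a k)⁻¹ - (a k + T)⁻¹))
  have hder : ∀ T : ℝ, 0 ≤ T → HasDerivAt F
      (∑ i, ∑ j, w i j * p i * (p i / (q j + T * p i))
        - ∑ k, (P k * (1 / (a k + T)) + (P k * a k - Q k) * (1 / (a k + T) ^ 2))) T := by
    intro T hT
    refine HasDerivAt.sub ?_ ?_
    · refine HasDerivAt.fun_sum fun i _ => HasDerivAt.fun_sum fun j _ => ?_
      by_cases h : w i j * p i = 0
      · simp only [h, zero_mul]; exact hasDerivAt_const _ _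
      · refine HasDerivAt.const_mul _ ?_
        have hqj : 0 < q j := lt_of_le_of_ne (hq j) (Ne.symm (h0 i j h))
        have hpos : q j + T * p i ≠ 0 := by have := hp i; positivity
        have h1 : HasDerivAt (fun T : ℝ => q j + T * p i) (p i) T := by
          simpa using ((hasDerivAt_id T).mul_const (p i)).const_add (q j)
        exact (h1.log hpos).sub_const _
    · refine HasDerivAt.fun_sum fun k _ => ?_
      have hpos : a k + T ≠ 0 := by have := ha k; positivity
      have h1 : HasDerivAt (fun T : ℝ => a k + T) 1 T := by
        simpa using (hasDerivAt_id T).const_add (a k)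
      refine HasDerivAt.add (HasDerivAt.const_mul _ ((h1.log hpos).sub_const _))
        (HasDerivAt.const_mul _ ?_)
      have h2 := (h1.fun_inv hpos).const_sub (a k)⁻¹
      have h3 : -(-1 / (a k + T) ^ 2) = 1 / (a k + T) ^ 2 := by rw [neg_div, neg_neg]
      rw [h3] at h2
      exact h2
  have hmono : MonotoneOn F (Set.Ici 0) := by
    refine monotoneOn_of_deriv_nonneg (convex_Ici 0)
      (fun x hx => (hder x hx).continuousAt.continuousWithinAt)
      (fun x hx => ?_) (fun x hx => ?_)
    · rw [interior_Ici] at hx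
      exact (hder x (le_of_lt hx)).differentiableAt.differentiableWithinAt
    · rw [interior_Ici] at hx
      rw [(hder x (le_of_lt hx)).deriv, sub_nonneg]
      refine le_trans (le_of_eq ?_) (hpt x hx (fun k => 1 / (a k + x)))
      refine Finset.sum_congr rfl fun k _ => ?_
      have hpos : a k + x ≠ 0 := by have := ha k; have : 0 < x := hx; positivity
      field_simp
      ring
  have hF0 : F 0 = 0 := by simp [F]
  have hFnn : ∀ T : ℝ, 0 ≤ T → 0 ≤ F T := fun T hT => by
    rw [← hF0]; exact hmono (Set.mem_Ici.2 le_rfl) hT hT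
  let G : ℝ → ℝ := fun T =>
    ∑ i, ∑ j, w i j * p i * (Real.log (q j * T⁻¹ + p i) - Real.log (q j))
      - ∑ k, (P k * (Real.log (a k * T⁻¹ + 1) - Real.log (a k))
        + (P k * a k - Q k) * ((a k)⁻¹ - (a k + T)⁻¹))
  have hFG : ∀ T : ℝ, 0 < T → F T = G T := by
    intro T hT
    have e1 : ∑ i, ∑ j, w i j * p i * (Real.log (q j + T * p i) - Real.log (q j))
        = ∑ i, ∑ j, w i j * p i * (Real.log (q j * T⁻¹ + p i) - Real.log (q j))
          + Real.log T := by
      rw [← mul_one (Real.log T), ← hw]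
      simp only [Finset.mul_sum, ← Finset.sum_add_distrib]
      refine Finset.sum_congr rfl fun i _ => Finset.sum_congr rfl fun j _ => ?_
      by_cases h : w i j * p i = 0
      · simp [h]
      · have hqj : 0 < q j := lt_of_le_of_ne (hq j) (Ne.symm (h0 i j h))
        have hpos : q j * T⁻¹ + p i ≠ 0 := by have := hp i; positivity
        have : q j + T * p i = T * (q j * T⁻¹ + p i) := by field_simp
        rw [this, Real.log_mul hT.ne' hpos]; ring
    have e2 : ∑ k, (P k * (Real.log (a k + T) - Real.log (a k))
        + (P k * a k - Q k) * ((a k)⁻¹ - (a k + T)⁻¹))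
        = ∑ k, (P k * (Real.log (a k * T⁻¹ + 1) - Real.log (a k))
        + (P k * a k - Q k) * ((a k)⁻¹ - (a k + T)⁻¹)) + Real.log T := by
      have hl : Real.log T = Real.log T * ∑ k, P k := by rw [hP, mul_one]
      conv_rhs => rw [hl]
      simp only [Finset.mul_sum, ← Finset.sum_add_distrib]
      refine Finset.sum_congr rfl fun k _ => ?_
      have hpos : a k * T⁻¹ + 1 ≠ 0 := by have := ha k; positivity
      have : a k + T = T * (a k * T⁻¹ + 1) := by field_simp
      have e : Real.log (a k + T) = Real.log T + Real.log (a k * T⁻¹ + 1) := by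
        rw [this, Real.log_mul hT.ne' hpos]
      rw [e]; ring
    simp only [F, G]
    rw [e1, e2]; ring
  have hlim : Tendsto G atTop (𝓝
      (∑ i, ∑ j, w i j * p i * (Real.log (p i) - Real.log (q j))
      - ∑ k, (P k * (Real.log 1 - Real.log (a k))
        + (P k * a k - Q k) * ((a k)⁻¹ - 0)))) := by
    refine Tendsto.sub ?_ ?_
    · refine tendsto_finsetSum _ fun i _ => tendsto_finsetSum _ fun j _ => ?_
      by_cases h : w i j * p i = 0
      · simp [h]
      · have hpi : p i ≠ 0 := right_ne_zero_of_mul h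
        refine Tendsto.const_mul _ (Tendsto.sub_const (Tendsto.log ?_ hpi) _)
        simpa using (tendsto_inv_atTop_zero.const_mul (q j)).add_const (p i)
    · refine tendsto_finsetSum _ fun k _ => ?_
      refine Tendsto.add (Tendsto.const_mul _ (Tendsto.sub_const (Tendsto.log ?_ one_ne_zero) _))
        (Tendsto.const_mul _ (Tendsto.const_sub _ ?_))
      · simpa using (tendsto_inv_atTop_zero.const_mul (a k)).add_const (1 : ℝ)
      · exact tendsto_inv_atTop_zero.comp (tendsto_atTop_add_const_left _ _ tendsto_id)
  have hnn := ge_of_tendsto hlim (by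
    filter_upwards [eventually_gt_atTop (0 : ℝ)] with T hT
    rw [← hFG T hT]; exact hFnn T hT.le)
  refine hnn.trans (le_of_eq ?_)
  rw [sub_eq_add_neg, ← Finset.sum_neg_distrib]
  congr 1
  refine Finset.sum_congr rfl fun k _ => ?_
  have := (ha k).ne'
  rw [Real.log_one]
  field_simp
  ring

/-- Variational (Donsker–Varadhan / Gibbs) lower bound for the quantum
relative entropy: for density operators `ρ, σ` with `supp ρ ⊆ supp σ` and any Hermitian `H`,
`D(ρ‖σ) ≥ Tr[H ρ] − ln Tr[e^H σ]`. -/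
theorem qRelEnt_variational_lower_bound
    (ρ σ H : Matrix d d ℂ)
    (hρ : IsDensity ρ) (hσ : IsDensity σ) (hsupp : SuppLE ρ σ)
    (hH : H.IsHermitian) :
    (Matrix.trace (H * ρ)).re - Real.log ((Matrix.trace (mexp H * σ)).re) ≤ qRelEnt ρ σ := by
  obtain ⟨hρp, hρt⟩ := hρ
  obtain ⟨hσp, hσt⟩ := hσ
  have hρh := hρp.isHermitian
  have hσh := hσp.isHermitian
  set U : Matrix d d ℂ := (hρh.eigenvectorUnitary : Matrix d d ℂ) with hU
  set V : Matrix d d ℂ := (hσh.eigenvectorUnitary : Matrix d d ℂ) with hV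
  set W : Matrix d d ℂ := (hH.eigenvectorUnitary : Matrix d d ℂ) with hW
  set p := hρh.eigenvalues with hp
  set q := hσh.eigenvalues with hq
  set h := hH.eigenvalues with hh
  have hUU : star U * U = 1 := Unitary.coe_star_mul_self _
  have hUU' : U * star U = 1 := Unitary.coe_mul_star_self _
  have hVV : star V * V = 1 := Unitary.coe_star_mul_self _
  have hVV' : V * star V = 1 := Unitary.coe_mul_star_self _
  have hWW : star W * W = 1 := Unitary.coe_star_mul_self _
  have hWW' : W * star W = 1 := Unitary.coe_mul_star_self _
  have sρ : ρ = U * Matrix.diagonal (fun i => (p i : ℂ)) * star U := by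
    conv_lhs => rw [hρh.spectral_theorem]
    rfl
  have sσ : σ = V * Matrix.diagonal (fun i => (q i : ℂ)) * star V := by
    conv_lhs => rw [hσh.spectral_theorem]
    rfl
  have sH : H = W * Matrix.diagonal (fun i => (h i : ℂ)) * star W := by
    conv_lhs => rw [hH.spectral_theorem]
    rfl
  have lρ : mlog ρ = U * Matrix.diagonal (fun i => (Real.log (p i) : ℂ)) * star U := by
    simp only [mlog, matFun, dif_pos hρh]; rfl
  have lσ : mlog σ = V * Matrix.diagonal (fun i => (Real.log (q i) : ℂ)) * star V := by
    simp only [mlog, matFun, dif_pos hσh]; rfl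
  have lH : mexp H = W * Matrix.diagonal (fun i => (Real.exp (h i) : ℂ)) * star W := by
    simp only [mexp, matFun, dif_pos hH]; rfl
  have hp0 : ∀ i, 0 ≤ p i := hρp.eigenvalues_nonneg
  have hq0 : ∀ i, 0 ≤ q i := hσp.eigenvalues_nonneg
  have hp1 : ∑ i, p i = 1 := by
    have := hρh.trace_eq_sum_eigenvalues
    rw [hρt] at this
    have h2 := congrArg Complex.re this
    simpa using h2.symm
  have hq1 : ∑ i, q i = 1 := by
    have := hσh.trace_eq_sum_eigenvalues
    rw [hσt] at this
    have h2 := congrArg Complex.re this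
    simpa using h2.symm
  clear_value U V W p q h
  set A := star U * W with hA
  set B := star W * V with hB
  have hAB : A * B = star U * V := by
    rw [hA, hB, Matrix.mul_assoc, ← Matrix.mul_assoc W, hWW', Matrix.one_mul]
  have hAA : star A * A = 1 := by
    rw [hA, star_mul, star_star, Matrix.mul_assoc, ← Matrix.mul_assoc U, hUU', Matrix.one_mul, hWW]
  have hAA' : A * star A = 1 := by
    rw [hA, star_mul, star_star, Matrix.mul_assoc, ← Matrix.mul_assoc W, hWW', Matrix.one_mul, hUU]
  have hBB : B * star B = 1 := by
    rw [hB, star_mul, star_star, Matrix.mul_assoc, ← Matrix.mul_assoc V, hVV', Matrix.one_mul, hWW]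
  have hBB' : star B * B = 1 := by
    rw [hB, star_mul, star_star, Matrix.mul_assoc, ← Matrix.mul_assoc W, hWW', Matrix.one_mul, hVV]
  have hone : ∀ i : d, ∑ j, Complex.normSq ((1 : Matrix d d ℂ) i j) = 1 := by
    intro i
    rw [Finset.sum_eq_single i]
    · simp
    · intro j _ hj; simp [Matrix.one_apply_ne hj.symm]
    · simp
  have hone' : ∀ j : d, ∑ i, Complex.normSq ((1 : Matrix d d ℂ) i j) = 1 := by
    intro j
    rw [Finset.sum_eq_single j]
    · simp
    · intro i _ hi; simp [Matrix.one_apply_ne hi]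
    · simp
  have rowA : ∀ i, ∑ k, Complex.normSq (A i k) = 1 := fun i => by
    have := qre_normSq_right A 1 hAA' i
    rwa [Matrix.one_mul, hone] at this
  have colB : ∀ j, ∑ k, Complex.normSq (B k j) = 1 := fun j => by
    have := qre_normSq_left B 1 hBB' j
    rwa [Matrix.mul_one, hone'] at this
  have rowAB : ∀ i, ∑ j, Complex.normSq ((A * B) i j) = 1 := fun i => by
    rw [qre_normSq_right B A hBB i, rowA]
  -- support condition
  have h0 : ∀ i j, p i ≠ 0 → (A * B) i j ≠ 0 → q j ≠ 0 := by
    intro i j hpi hm hqj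
    have hσv : σ.mulVec (V.col j) = 0 := by
      have e : σ * V = V * Matrix.diagonal (fun i => (q i : ℂ)) := by
        rw [sσ, Matrix.mul_assoc, hVV, Matrix.mul_one]
      ext l
      have := congrFun (congrFun e l) j
      rw [Matrix.mul_diagonal, hqj, Matrix.mul_apply] at this
      simpa [Matrix.mulVec, dotProduct] using this
    have hρv := hsupp _ hσv
    have e : star U * (ρ * V) = Matrix.diagonal (fun i => (p i : ℂ)) * (A * B) := by
      rw [hAB, sρ]
      simp only [← Matrix.mul_assoc]
      rw [hUU, Matrix.one_mul]
    have e2 := congrFun (congrFun e i) j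
    rw [Matrix.diagonal_mul, Matrix.mul_apply] at e2
    have e3 : ∀ l, (ρ * V) l j = 0 := fun l => by
      have := congrFun hρv l
      simpa [Matrix.mulVec, dotProduct, Matrix.mul_apply] using this
    simp only [e3, mul_zero, Finset.sum_const_zero] at e2
    rcases mul_eq_zero.1 e2.symm with h1 | h1
    · exact hpi (by exact_mod_cast h1)
    · exact hm h1
  set P : d → ℝ := fun k => ∑ i, p i * Complex.normSq (A i k) with hPdef
  set Q : d → ℝ := fun k => ∑ j, q j * Complex.normSq (B k j) with hQdef
  have hP1 : ∑ k, P k = 1 := by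
    simp only [hPdef]
    rw [Finset.sum_comm]
    simp_rw [← Finset.mul_sum, rowA, mul_one, hp1]
  have hQ1 : ∑ k, Q k = 1 := by
    simp only [hQdef]
    rw [Finset.sum_comm]
    simp_rw [← Finset.mul_sum, colB, mul_one, hq1]
  have hQ0 : ∀ k, 0 ≤ Q k := fun k =>
    Finset.sum_nonneg fun j _ => mul_nonneg (hq0 j) (Complex.normSq_nonneg _)
  have t1 : (Matrix.trace (H * ρ)).re = ∑ k, P k * h k := by
    rw [Matrix.trace_mul_comm, sρ, sH, qre_trace_aux, Finset.sum_comm]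
    refine Finset.sum_congr rfl fun k _ => ?_
    simp only [hPdef, Finset.sum_mul]
    exact Finset.sum_congr rfl fun i _ => by ring
  have t2 : (Matrix.trace (mexp H * σ)).re = ∑ k, Real.exp (h k) * Q k := by
    rw [lH, sσ, qre_trace_aux]
    refine Finset.sum_congr rfl fun k _ => ?_
    simp only [hQdef, Finset.mul_sum]
    exact Finset.sum_congr rfl fun i _ => by ring
  have t3 : qRelEnt ρ σ
      = ∑ i, ∑ j, Complex.normSq ((A * B) i j) * p i * (Real.log (p i) - Real.log (q j)) := by
    have a1 : (Matrix.trace (ρ * mlog ρ)).re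
        = ∑ i, ∑ j, Complex.normSq ((A * B) i j) * p i * Real.log (p i) := by
      rw [lρ]
      nth_rewrite 1 [sρ]
      rw [qre_trace_aux, hUU]
      refine Finset.sum_congr rfl fun i _ => ?_
      rw [← Finset.sum_mul, ← Finset.sum_mul, rowAB, Finset.sum_eq_single i]
      · simp
      · intro j _ hj; simp [Matrix.one_apply_ne hj.symm]
      · simp
    have a2 : (Matrix.trace (ρ * mlog σ)).re
        = ∑ i, ∑ j, Complex.normSq ((A * B) i j) * p i * Real.log (q j) := by
      rw [lσ, sρ, qre_trace_aux, hAB]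
      exact Finset.sum_congr rfl fun i _ => Finset.sum_congr rfl fun j _ => by ring
    rw [qRelEnt, Matrix.mul_sub, Matrix.trace_sub, Complex.sub_re, a1, a2]
    simp only [mul_sub, Finset.sum_sub_distrib]
  set Z := ∑ k, Real.exp (h k) * Q k with hZ
  have hZ0 : 0 < Z := by
    have hnn : ∀ k ∈ Finset.univ, 0 ≤ Real.exp (h k) * Q k :=
      fun k _ => mul_nonneg (Real.exp_pos _).le (hQ0 k)
    refine lt_of_le_of_ne (Finset.sum_nonneg hnn) fun hz => ?_
    have := (Finset.sum_eq_zero_iff_of_nonneg hnn).1 hz.symm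
    have hQz : ∑ k, Q k = 0 := Finset.sum_eq_zero fun k hk =>
      (mul_eq_zero.1 (this k hk)).resolve_left (Real.exp_pos _).ne'
    rw [hQ1] at hQz
    exact one_ne_zero hQz
  have key := qre_integrated (fun i j => Complex.normSq ((A * B) i j)) p q P Q
    (fun k => Z * Real.exp (-h k)) hp0 hq0 (fun k => mul_pos hZ0 (Real.exp_pos _))
    (fun i j hij => h0 i j (right_ne_zero_of_mul hij)
      (fun hc => left_ne_zero_of_mul hij (by simp [hc])))
    (by simp_rw [← Finset.sum_mul, rowAB, one_mul, hp1]) hP1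
    (fun t ht f => qre_pointwise A B hAA hBB p q f hp0 hq0 t ht h0)
  rw [← t3] at key
  have fin : ∑ k, (P k * Real.log (Z * Real.exp (-h k)) - (P k - Q k / (Z * Real.exp (-h k))))
      = Real.log Z - ∑ k, P k * h k := by
    have : ∀ k, P k * Real.log (Z * Real.exp (-h k)) - (P k - Q k / (Z * Real.exp (-h k)))
        = P k * Real.log Z - P k * h k - P k + (Real.exp (h k) * Q k) * Z⁻¹ := by
      intro k
      rw [Real.log_mul hZ0.ne' (Real.exp_pos _).ne', Real.log_exp, Real.exp_neg]
      have := (Real.exp_pos (h k)).ne'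
      field_simp
      ring
    simp_rw [this]
    rw [Finset.sum_add_distrib, Finset.sum_sub_distrib, Finset.sum_sub_distrib,
      ← Finset.sum_mul, ← Finset.sum_mul, hP1, ← hZ, mul_inv_cancel₀ hZ0.ne']
    ring
  rw [fin] at key
  rw [t1, t2]
  linarith
end

section
/- Sub-Gaussian lower bound on the expected true loss: if the loss operator satisfies the classical-quantum α-sub-Gaussian property with respect to the product state σ_prod, then for any γ > 1, exp(L_true) ≥ L_emp · exp(−[γα²/(2(γ−1)) + ((γ−1)/γ) D̃_γ(σ_joint‖σ_prod)]), where L_emp = Tr[L σ_joint], L_true = Tr[L σ_prod], and D̃_γ is the sandwiched Rényi divergence. -/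
open Matrix
open scoped ComplexOrder

variable {d : Type*} [Fintype d] [DecidableEq d]

/-- Real power of a (positive semidefinite) matrix via spectral calculus. -/
noncomputable def mpow (A : Matrix d d ℂ) (p : ℝ) : Matrix d d ℂ :=
  matFun (fun x => x ^ p) A

/-- The sandwiched Rényi divergence of order `γ`:
`D̃_γ(ρ‖σ) = (1/(γ−1)) ln Tr[(σ^{(1−γ)/(2γ)} ρ σ^{(1−γ)/(2γ)})^γ]`. -/
noncomputable def sandwichedRenyi (γ : ℝ) (ρ σ : Matrix d d ℂ) : ℝ :=
  (γ - 1)⁻¹ *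
    Real.log ((Matrix.trace
      (mpow (mpow σ ((1 - γ) / (2 * γ)) * ρ * mpow σ ((1 - γ) / (2 * γ))) γ)).re)


namespace TLLB
open Filter Topology

/-- Conjugated diagonal matrix. -/
noncomputable def DD (U : Matrix d d ℂ) (g : d → ℂ) : Matrix d d ℂ :=
  U * Matrix.diagonal g * star U

/-- `x ^ z` for `x ≥ 0`, with value `0` at `x = 0`. -/
noncomputable def cx (x : ℝ) (z : ℂ) : ℂ :=
  if x = 0 then 0 else Complex.exp (z * (Real.log x : ℂ))

lemma cx_add (x : ℝ) (z w : ℂ) : cx x (z + w) = cx x z * cx x w := by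
  unfold cx; split_ifs
  · simp
  · rw [add_mul, Complex.exp_add]

lemma cx_real {x : ℝ} (hx : 0 ≤ x) {t : ℝ} (ht : t ≠ 0) : cx x (t : ℂ) = ((x ^ t : ℝ) : ℂ) := by
  unfold cx; split_ifs with h
  · subst h; simp [Real.zero_rpow ht]
  · have : 0 < x := lt_of_le_of_ne hx (Ne.symm h)
    rw [Real.rpow_def_of_pos this]; push_cast; rw [mul_comm]

lemma norm_cx (x : ℝ) (z : ℂ) : ‖cx x z‖ = if x = 0 then 0 else Real.exp (z.re * Real.log x) := by
  unfold cx; split_ifs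
  · simp
  · rw [Complex.norm_exp]; simp

lemma norm_cx_re_zero (x : ℝ) {z : ℂ} (hz : z.re = 0) : ‖cx x z‖ ≤ 1 := by
  rw [norm_cx]; split_ifs <;> simp [hz]

lemma norm_cx_re {x : ℝ} (hx : 0 ≤ x) {z : ℂ} (hz : z.re ≠ 0) : ‖cx x z‖ = x ^ z.re := by
  rw [norm_cx]; split_ifs with h
  · subst h; simp [Real.zero_rpow hz]
  · have : 0 < x := lt_of_le_of_ne hx (Ne.symm h)
    rw [Real.rpow_def_of_pos this, mul_comm]

lemma star_cx (x : ℝ) (z : ℂ) : star (cx x z) = cx x (star z) := by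
  unfold cx; split_ifs
  · simp
  · simp only [Complex.star_def]
    rw [← Complex.exp_conj]; simp

lemma diff_cx (x : ℝ) : Differentiable ℂ (cx x) := by
  unfold cx; split_ifs
  · exact differentiable_const _
  · fun_prop

lemma DD_mul {U : Matrix d d ℂ} (hU : star U * U = 1) (g h : d → ℂ) :
    DD U g * DD U h = DD U (fun i => g i * h i) := by
  unfold DD
  calc _ = U * diagonal g * (star U * U) * diagonal h * star U := by simp only [mul_assoc]
    _ = _ := by rw [hU, mul_one, mul_assoc U, diagonal_mul_diagonal]

lemma star_DD (U : Matrix d d ℂ) (g : d → ℂ) : star (DD U g) = DD U (fun i => star (g i)) := by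
  unfold DD
  simp only [star_mul, star_star, star_eq_conjTranspose, diagonal_conjTranspose, mul_assoc,
    conjTranspose_mul, conjTranspose_conjTranspose]
  rfl

lemma trace_mul_DD (U M : Matrix d d ℂ) (g : d → ℂ) :
    trace (M * DD U g) = ∑ i, (star U * M * U) i i * g i := by
  unfold DD
  rw [← mul_assoc, trace_mul_comm, ← mul_assoc, ← mul_assoc]
  simp [trace, mul_diagonal]

lemma trace_DD {U : Matrix d d ℂ} (hU : star U * U = 1) (g : d → ℂ) :
    trace (DD U g) = ∑ i, g i := by
  have := trace_mul_DD U 1 g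
  rw [one_mul] at this
  rw [this, mul_one, hU]; simp

lemma trace_mono {U M : Matrix d d ℂ} (hM : M.PosSemidef) {g h : d → ℝ} (hgh : ∀ i, g i ≤ h i) :
    (trace (M * DD U (fun i => (g i : ℂ)))).re ≤ (trace (M * DD U (fun i => (h i : ℂ)))).re := by
  rw [trace_mul_DD, trace_mul_DD, Complex.re_sum, Complex.re_sum]
  have hP : (star U * M * U).PosSemidef := hM.conjTranspose_mul_mul_same U
  refine Finset.sum_le_sum fun i _ => ?_
  have := (Complex.le_def.1 (hP.diag_nonneg (i := i))).1
  simp only [Complex.zero_re] at this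
  simp only [Complex.re_mul_ofReal]
  exact mul_le_mul_of_nonneg_left (hgh i) this

lemma trace_cs (M N : Matrix d d ℂ) :
    ‖trace (M * N)‖ ^ 2 ≤ (trace (M * star M)).re * (trace (star N * N)).re := by
  have h1 : trace (M * N) = ∑ q : d × d, M q.1 q.2 * N q.2 q.1 := by
    simp [trace, mul_apply, Fintype.sum_prod_type]
  have h2 : (trace (M * star M)).re = ∑ q : d × d, ‖M q.1 q.2‖ ^ 2 := by
    simp [trace, mul_apply, Fintype.sum_prod_type, Complex.mul_conj, Complex.normSq_eq_norm_sq,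
      star_apply, ← Complex.ofReal_pow]
  have h3 : (trace (star N * N)).re = ∑ q : d × d, ‖N q.2 q.1‖ ^ 2 := by
    simp [trace, mul_apply, Fintype.sum_prod_type, Complex.conj_mul', 
      star_apply, ← Complex.ofReal_pow]
  rw [h1, h2, h3]
  calc _ ≤ (∑ q : d × d, ‖M q.1 q.2‖ * ‖N q.2 q.1‖) ^ 2 := by
        gcongr
        refine (norm_sum_le _ _).trans (le_of_eq ?_)
        simp
    _ ≤ _ := Finset.sum_mul_sq_le_sq_mul_sq _ _ _

section norm
open scoped Matrix.Norms.L2Operator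

lemma norm_U {U : Matrix d d ℂ} (hU : star U * U = 1) : ‖U‖ ≤ 1 := by
  have h := CStarRing.norm_star_mul_self (x := U)
  rw [hU] at h
  have h1 : ‖(1 : Matrix d d ℂ)‖ ≤ 1 := by
    rw [← diagonal_one, l2_opNorm_diagonal]
    exact (pi_norm_le_iff_of_nonneg zero_le_one).2 (by simp)
  nlinarith [norm_nonneg U]

lemma norm_DD {U : Matrix d d ℂ} (hU : star U * U = 1) {g : d → ℂ} (hg : ∀ i, ‖g i‖ ≤ 1) :
    ‖DD U g‖ ≤ 1 := by
  unfold DD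
  have h1 := norm_U hU
  have h2 : ‖star U‖ ≤ 1 := by rwa [norm_star]
  have h3 : ‖(diagonal g : Matrix d d ℂ)‖ ≤ 1 := by
    rw [l2_opNorm_diagonal]
    exact (pi_norm_le_iff_of_nonneg zero_le_one).2 hg
  calc _ ≤ ‖U‖ * ‖(diagonal g : Matrix d d ℂ)‖ * ‖star U‖ := norm_mul₃_le
    _ ≤ 1 * 1 * 1 := by gcongr
    _ = 1 := by norm_num

lemma entry_le (M : Matrix d d ℂ) (i j : d) : ‖M i j‖ ≤ ‖M‖ := by
  have h := l2_opNorm_mulVec M (EuclideanSpace.single j 1)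
  rw [EuclideanSpace.norm_single, norm_one, mul_one] at h
  refine le_trans ?_ h
  refine le_trans (le_of_eq ?_) (PiLp.norm_apply_le _ i)
  simp

lemma trace_bound {A U W : Matrix d d ℂ} {g a b c: d → ℂ} (hA : star A * A = 1)
    (hU : star U * U = 1) (hW : star W * W = 1)
    (ha : ∀ i, ‖a i‖ ≤ 1) (hb : ∀ i, ‖b i‖ ≤ 1) (hc : ∀ i, ‖c i‖ ≤ 1) :
    ‖trace (DD A a * DD U b * DD A c * DD W g)‖ ≤ ∑ i, ‖g i‖ := by
  rw [trace_mul_DD]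
  refine (norm_sum_le _ _).trans (Finset.sum_le_sum fun i _ => ?_)
  rw [norm_mul]
  refine mul_le_of_le_one_left (norm_nonneg _) ((entry_le _ i i).trans ?_)
  have h1 := norm_DD hA ha
  have h2 := norm_DD hU hb
  have h3 := norm_DD hA hc
  have h4 := norm_U hW
  have h5 : ‖star W‖ ≤ 1 := by rwa [norm_star]
  calc _ ≤ ‖star W‖ * (‖DD A a‖ * ‖DD U b‖ * ‖DD A c‖) * ‖W‖ := by
        refine norm_mul₃_le.trans ?_
        gcongr
        exact norm_mul₃_le
    _ ≤ 1 * (1 * 1 * 1) * 1 := by gcongr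
    _ = 1 := by norm_num

end norm

lemma right_bound {V U W : Matrix d d ℂ} (hV : star V * V = 1) (hU : star U * U = 1)
    (hW : star W * W = 1) (a b c : d → ℂ) (hc : ∀ i, ‖c i‖ ≤ 1) :
    ‖trace (DD V a * DD U (fun i => b i * b i) * DD V a * DD W c)‖ ≤
      (trace (DD U (fun i => ((‖b i‖ ^ 2 : ℝ) : ℂ)) * DD V (fun i => ((‖a i‖ ^ 2 : ℝ) : ℂ)))).re := by
  set T := (trace (DD U (fun i => ((‖b i‖ ^ 2 : ℝ) : ℂ)) *
    DD V (fun i => ((‖a i‖ ^ 2 : ℝ) : ℂ)))).re with hT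
  have hab : ∀ z : ℂ, z * star z = ((‖z‖ ^ 2 : ℝ) : ℂ) := fun z => by
    rw [Complex.star_def, Complex.mul_conj, Complex.normSq_eq_norm_sq]
  have hab' : ∀ z : ℂ, star z * z = ((‖z‖ ^ 2 : ℝ) : ℂ) := fun z => by rw [mul_comm, hab]
  set M := DD V a * DD U b
  set K := DD U b * DD V a
  have e : DD V a * DD U (fun i => b i * b i) * DD V a * DD W c = M * (K * DD W c) := by
    rw [← DD_mul hU]; simp only [M, K, mul_assoc]
  have hM : (trace (M * star M)).re = T := by
    have : M * star M = DD V a * (DD U (fun i => ((‖b i‖ ^ 2 : ℝ) : ℂ)) * star (DD V a)) := by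
      simp only [M, star_mul, mul_assoc]
      rw [← mul_assoc (DD U b), star_DD U, DD_mul hU]
      simp only [hab]
    rw [this, trace_mul_comm, mul_assoc, star_DD, DD_mul hV]
    simp only [hab']; rfl
  have hK : (trace (star K * K)).re = T := by
    have : star K * K = star (DD V a) * (DD U (fun i => ((‖b i‖ ^ 2 : ℝ) : ℂ)) * (DD V a)) := by
      simp only [K, star_mul, mul_assoc]
      rw [← mul_assoc (star (DD U b)), star_DD U, DD_mul hU]
      simp only [hab']
    rw [this, trace_mul_comm, mul_assoc, star_DD, DD_mul hV]
    simp only [hab]; rfl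
  have hT0 : 0 ≤ T := by
    rw [← hK]
    have := (Complex.le_def.1 (Matrix.posSemidef_conjTranspose_mul_self K).trace_nonneg).1
    simpa [star_eq_conjTranspose] using this
  have hN : (trace (star (K * DD W c) * (K * DD W c))).re ≤ T := by
    have : trace (star (K * DD W c) * (K * DD W c)) =
        trace ((star K * K) * DD W (fun i => ((‖c i‖ ^ 2 : ℝ) : ℂ))) := by
      rw [star_mul, mul_assoc, trace_mul_comm, star_DD, ← mul_assoc, mul_assoc, DD_mul hW]
      simp only [hab, mul_assoc]
    rw [this]
    refine (trace_mono (h := fun _ => (1 : ℝ)) (Matrix.posSemidef_conjTranspose_mul_self K) ?_).trans ?_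
    · intro i; have := hc i; have := norm_nonneg (c i); nlinarith
    · have h1 : DD W (fun _ => ((1 : ℝ) : ℂ)) = 1 := by
        unfold DD
        have : (diagonal (fun _ : d => ((1 : ℝ) : ℂ))) = (1 : Matrix d d ℂ) := by
          simp
        rw [this, mul_one]
        exact mul_eq_one_comm.1 hW
      rw [h1, mul_one]
      exact hK.le
  have := trace_cs M (K * DD W c)
  rw [← e, hM] at this
  have h2 : ‖trace (DD V a * DD U (fun i => b i * b i) * DD V a * DD W c)‖ ^ 2 ≤ T ^ 2 := by
    nlinarith
  exact (pow_le_pow_iff_left₀ (norm_nonneg _) hT0 two_ne_zero).1 h2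

open Complex.HadamardThreeLines in
lemma interp {V U W : Matrix d d ℂ} (hV : star V * V = 1) (hU : star U * U = 1)
    (hW : star W * W = 1) (s l x : d → ℝ) (hs : ∀ i, 0 ≤ s i) (hl : ∀ i, 0 ≤ l i)
    (hx : ∀ i, 0 ≤ x i) (γ p : ℝ) (hp : 1 < p) (hpq : p.HolderConjugate γ) :
    ‖trace (DD V (fun i => ((s i ^ (1 / (2 * p)) : ℝ) : ℂ)) * DD U (fun i => (l i : ℂ)) *
      DD V (fun i => ((s i ^ (1 / (2 * p)) : ℝ) : ℂ)) * DD W (fun i => (x i : ℂ)))‖ ≤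
    (∑ i, x i ^ γ) ^ (1 / γ) *
      (trace (DD U (fun i => ((l i ^ p : ℝ) : ℂ)) * DD V (fun i => (s i : ℂ)))).re ^ (1 / p) := by
  have hγ : 0 < γ := hpq.symm.pos
  have hp0 : 0 < p := hpq.pos
  have hsum : 1 / p + 1 / γ = 1 := by simpa using hpq.inv_add_inv_eq_one
  set f : ℂ → ℂ := fun z => trace (DD V (fun i => cx (s i) (z / 2)) *
    DD U (fun i => cx (l i) (p * z)) * DD V (fun i => cx (s i) (z / 2)) *
    DD W (fun i => cx (x i) (γ * (1 - z)))) with hf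
  have key := norm_le_interp_of_mem_verticalClosedStrip₀₁' f (z := ((1 / p : ℝ) : ℂ))
    (a := ∑ i, x i ^ γ)
    (b := (trace (DD U (fun i => ((l i ^ p : ℝ) : ℂ)) * DD V (fun i => (s i : ℂ)))).re)
    ?_ ?_ ?_ ?_ ?_
  · have e1 : ∀ i, cx (s i) (((1 / p : ℝ) : ℂ) / 2) = ((s i ^ (1 / (2 * p)) : ℝ) : ℂ) := fun i => by
      rw [← cx_real (hs i) (by positivity)]
      congr 1; push_cast; field_simp
    have e2 : ∀ i, cx (l i) (p * ((1 / p : ℝ) : ℂ)) = (l i : ℂ) := fun i => by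
      have : (p * ((1 / p : ℝ) : ℂ)) = ((1 : ℝ) : ℂ) := by
        rw [← Complex.ofReal_mul]; congr 1; field_simp
      rw [this, cx_real (hl i) one_ne_zero, Real.rpow_one]
    have e3 : ∀ i, cx (x i) (γ * (1 - ((1 / p : ℝ) : ℂ))) = (x i : ℂ) := fun i => by
      have : (γ * (1 - ((1 / p : ℝ) : ℂ))) = ((1 : ℝ) : ℂ) := by
        rw [← Complex.ofReal_one, ← Complex.ofReal_sub, ← Complex.ofReal_mul]; congr 1
        rw [show 1 - 1 / p = 1 / γ by linarith]; field_simp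
      rw [this, cx_real (hx i) one_ne_zero, Real.rpow_one]
    simp only [hf, e1, e2, e3, Complex.ofReal_re] at key
    rwa [show 1 - 1 / p = 1 / γ by linarith] at key
  · simp only [verticalClosedStrip, Set.mem_preimage, Complex.ofReal_re, Set.mem_Icc]
    constructor
    · positivity
    · have : 0 < 1 / γ := by positivity
      linarith
  · apply Differentiable.diffContOnCl
    have d1 : ∀ i, Differentiable ℂ (fun z : ℂ => cx (s i) (z / 2)) := fun i =>
      (diff_cx _).comp (by fun_prop)
    have d2 : ∀ i, Differentiable ℂ (fun z : ℂ => cx (l i) (p * z)) := fun i =>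
      (diff_cx _).comp (by fun_prop)
    have d3 : ∀ i, Differentiable ℂ (fun z : ℂ => cx (x i) (γ * (1 - z))) := fun i =>
      (diff_cx _).comp (by fun_prop)
    simp only [hf, DD, trace, diag_apply, mul_apply, mul_diagonal, diagonal_apply]
    simp only [mul_ite, mul_zero, Finset.sum_ite_eq', Finset.mem_univ, if_true]
    fun_prop
  · have B : ∀ (y : ℝ) (φ : ℂ → ℂ) (c0 c1 : ℝ), (∀ z, (φ z).re = c0 + c1 * z.re) →
        (fun z : ℂ => cx y (φ z)) =O[𝓟 (verticalClosedStrip 0 1)] (fun _ => (1 : ℝ)) := by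
      intro y φ c0 c1 h
      refine Asymptotics.IsBigO.of_bound (Real.exp ((|c0| + |c1|) * |Real.log y|)) ?_
      rw [Filter.eventually_principal]
      intro z hz
      obtain ⟨h0, h1⟩ := hz
      rw [norm_cx]
      split_ifs
      · simp; positivity
      · rw [norm_one, mul_one]
        refine Real.exp_le_exp.2 ((le_abs_self _).trans ?_)
        rw [abs_mul, h z]
        gcongr
        refine (abs_add_le _ _).trans (add_le_add le_rfl ?_)
        rw [abs_mul]
        exact mul_le_of_le_one_right (abs_nonneg _) (by rw [abs_le]; constructor <;> linarith)
    have b1 := fun i => B (s i) (fun z => z / 2) 0 (1 / 2) (fun z => by simp; ring)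
    have b2 := fun i => B (l i) (fun z => p * z) 0 p (fun z => by simp)
    have b3 := fun i => B (x i) (fun z => γ * (1 - z)) γ (-γ) (fun z => by simp; ring)
    have cc : ∀ c : ℂ, (fun _ : ℂ => c) =O[𝓟 (verticalClosedStrip 0 1)] (fun _ => (1 : ℝ)) :=
      fun c => Asymptotics.isBigO_const_const c one_ne_zero _
    have mm : ∀ {g h : ℂ → ℂ}, g =O[𝓟 (verticalClosedStrip 0 1)] (fun _ => (1 : ℝ)) →
        h =O[𝓟 (verticalClosedStrip 0 1)] (fun _ => (1 : ℝ)) →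
        (fun z => g z * h z) =O[𝓟 (verticalClosedStrip 0 1)] (fun _ => (1 : ℝ)) := by
      intro g h hg hh
      simpa using hg.mul hh
    have main : f =O[𝓟 (verticalClosedStrip 0 1)] (fun _ => (1 : ℝ)) := by
      simp only [hf, DD, trace, diag_apply, mul_apply, mul_diagonal, diagonal_apply]
      simp only [mul_ite, mul_zero, Finset.sum_ite_eq', Finset.mem_univ, if_true]
      refine Asymptotics.IsBigO.fun_sum fun i _ => Asymptotics.IsBigO.fun_sum fun j _ => mm ?_ ?_
      · refine Asymptotics.IsBigO.fun_sum fun k _ => mm ?_ ?_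
        · refine Asymptotics.IsBigO.fun_sum fun m _ => mm ?_ ?_
          · exact Asymptotics.IsBigO.fun_sum fun n _ => mm (mm (cc _) (b1 _)) (cc _)
          · exact Asymptotics.IsBigO.fun_sum fun n _ => mm (mm (cc _) (b2 _)) (cc _)
        · exact Asymptotics.IsBigO.fun_sum fun n _ => mm (mm (cc _) (b1 _)) (cc _)
      · exact Asymptotics.IsBigO.fun_sum fun n _ => mm (mm (cc _) (b3 _)) (cc _)
    obtain ⟨C, hC⟩ := main.bound
    rw [Filter.eventually_principal] at hC
    refine ⟨C, ?_⟩
    rintro _ ⟨z, hz, rfl⟩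
    simpa using hC z hz
  · intro z hz
    have hz : z.re = 0 := hz
    refine (trace_bound hV hU hW (fun i => norm_cx_re_zero _ ?_) (fun i => norm_cx_re_zero _ ?_)
      (fun i => norm_cx_re_zero _ ?_)).trans (le_of_eq ?_)
    · simp [hz]
    · simp [hz]
    · simp [hz]
    · refine Finset.sum_congr rfl fun i _ => ?_
      have : (γ * (1 - z)).re = γ := by simp [hz]
      rw [norm_cx_re (hx i) (by rw [this]; exact hγ.ne'), this]
  · intro z hz
    have hz : z.re = 1 := hz
    have := right_bound hV hU hW (fun i => cx (s i) (z / 2)) (fun i => cx (l i) (p * z / 2))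
      (fun i => cx (x i) (γ * (1 - z))) (fun i => norm_cx_re_zero _ (by simp [hz]))
    simp only [← cx_add, add_halves] at this
    refine this.trans (le_of_eq ?_)
    have e1 : ∀ i, ‖cx (s i) (z / 2)‖ ^ 2 = s i := fun i => by
      have h : (z / 2).re = 1 / 2 := by simp [hz]
      rw [norm_cx_re (hs i) (by rw [h]; norm_num), h, ← Real.rpow_natCast, ← Real.rpow_mul (hs i)]
      norm_num
    have e2 : ∀ i, ‖cx (l i) (p * z / 2)‖ ^ 2 = l i ^ p := fun i => by
      have h : (p * z / 2).re = p / 2 := by simp [hz]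
      rw [norm_cx_re (hl i) (by rw [h]; positivity), h, ← Real.rpow_natCast,
        ← Real.rpow_mul (hl i)]
      norm_num
    simp only [e1, e2]

lemma matFun_eq {A : Matrix d d ℂ} (hA : A.IsHermitian) (f : ℝ → ℝ) :
    matFun f A = DD (hA.eigenvectorUnitary : Matrix d d ℂ)
      (fun i => (f (hA.eigenvalues i) : ℂ)) := by
  simp [matFun, hA, DD]

lemma matFun_cfc {A : Matrix d d ℂ} (hA : A.IsHermitian) (f : ℝ → ℝ) :
    matFun f A = cfc f A := by
  rw [hA.cfc_eq, matFun_eq hA]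
  rfl

lemma matFun_id {A : Matrix d d ℂ} (hA : A.IsHermitian) : matFun (fun x => x) A = A := by
  rw [matFun_cfc hA]; exact cfc_id ℝ A hA

lemma unit_eig {A : Matrix d d ℂ} (hA : A.IsHermitian) :
    star (hA.eigenvectorUnitary : Matrix d d ℂ) * (hA.eigenvectorUnitary : Matrix d d ℂ) = 1 :=
  Unitary.star_mul_self_of_mem hA.eigenvectorUnitary.2

lemma mexp_affine {A : Matrix d d ℂ} (hA : A.IsHermitian) (t c : ℝ) :
    mexp (t • (A - c • (1 : Matrix d d ℂ))) = matFun (fun x => Real.exp (t * (x - c))) A := by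
  have h1 : t • (A - c • (1 : Matrix d d ℂ)) = cfc (fun x : ℝ => t * (x - c)) A := by
    have hA' : IsSelfAdjoint A := hA
    rw [cfc_const_mul t (fun x : ℝ => x - c) A, cfc_sub (fun x : ℝ => x) (fun _ => c) A,
      cfc_id' ℝ A, cfc_const c A, Algebra.algebraMap_eq_smul_one]
  have h2 : (t • (A - c • (1 : Matrix d d ℂ))).IsHermitian := by
    rw [h1]; exact cfc_predicate _ A
  unfold mexp
  rw [matFun_cfc h2, matFun_cfc hA, h1]
  exact (cfc_comp' Real.exp (fun x : ℝ => t * (x - c)) A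
    (Real.continuous_exp.continuousOn) (by fun_prop) hA).symm

lemma mpow_mul {A : Matrix d d ℂ} (hA : A.PosSemidef) {t : ℝ} (ht : t ≠ 0) :
    mpow A t * mpow A (-t) = matFun (fun x => if x = 0 then 0 else 1) A := by
  unfold mpow
  rw [matFun_eq hA.1, matFun_eq hA.1, matFun_eq hA.1, DD_mul (unit_eig hA.1)]
  congr 1
  funext i
  rw [← Complex.ofReal_mul]
  congr 1
  have h0 := hA.eigenvalues_nonneg i
  split_ifs with h
  · rw [h, Real.zero_rpow ht, zero_mul]
  · rw [← Real.rpow_add (lt_of_le_of_ne h0 (Ne.symm h)), add_neg_cancel, Real.rpow_zero]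

lemma mul_proj {A B : Matrix d d ℂ} (hA : A.PosSemidef) (h : SuppLE B A) :
    B * matFun (fun x => if x = 0 then 0 else 1) A = B := by
  set P := matFun (fun x : ℝ => if x = 0 then (0 : ℝ) else 1) A with hP
  have h1 : A * P = A := by
    conv_lhs => rw [← matFun_id hA.1]
    conv_rhs => rw [← matFun_id hA.1]
    rw [hP, matFun_eq hA.1, matFun_eq hA.1, DD_mul (unit_eig hA.1)]
    congr 1
    funext i
    split_ifs with h <;> simp [h]
  have h2 : A * (P - 1) = 0 := by rw [mul_sub, h1, mul_one, sub_self]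
  have h3 : B * (P - 1) = 0 := by
    ext i j
    have := h (fun k => (P - 1) k j) (by
      funext i
      exact congrFun (congrFun h2 i) j)
    exact congrFun this i
  rw [mul_sub, mul_one, sub_eq_zero] at h3
  exact h3

lemma matFun_herm {A : Matrix d d ℂ} (hA : A.IsHermitian) (f : ℝ → ℝ) :
    star (matFun f A) = matFun f A := by
  rw [matFun_eq hA, star_DD]; simp

end TLLB

/-- Sub-Gaussian lower bound on the expected true loss: if the loss
operator `L` is classical-quantum `α`-sub-Gaussian with respect to the product state
`σ_prod`, then for any `γ > 1`,
`exp(L_true) ≥ L_emp · exp(−[γα²/(2(γ−1)) + ((γ−1)/γ) D̃_γ(σ_joint‖σ_prod)])`,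
where `L_emp = Tr[L σ_joint]` and `L_true = Tr[L σ_prod]`. -/
theorem true_loss_lower_bound_quantum
    (σjoint σprod L : Matrix d d ℂ) (α γ : ℝ) (hα : 0 < α) (hγ : 1 < γ)
    (hjoint : IsDensity σjoint) (hprod : IsDensity σprod)
    (hsupp : SuppLE σjoint σprod)
    (hL : L.PosSemidef)
    (hSG : ∀ lam : ℝ,
      (Matrix.trace (mexp (lam • (L - (Matrix.trace (L * σprod)).re • (1 : Matrix d d ℂ)))
          * σprod)).re ≤ Real.exp (lam ^ 2 * α ^ 2 / 2)) :
    (Matrix.trace (L * σjoint)).re *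
        Real.exp (-(γ * α ^ 2 / (2 * (γ - 1)) +
          (γ - 1) / γ * sandwichedRenyi γ σjoint σprod)) ≤
      Real.exp ((Matrix.trace (L * σprod)).re) := by
  obtain ⟨hJ, -⟩ := hjoint
  obtain ⟨hP, -⟩ := hprod
  set p : ℝ := γ / (γ - 1) with hpdef
  have hγ1 : 0 < γ - 1 := by linarith
  have hγ0 : 0 < γ := by linarith
  have hpq : p.HolderConjugate γ := (Real.HolderConjugate.conjExponent hγ).symm
  have hp : 1 < p := hpq.lt
  have hp0 : 0 < p := hpq.pos
  set c := (Matrix.trace (L * σprod)).re with hc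
  set r : ℝ := (1 - γ) / (2 * γ) with hr
  have hr' : 1 / (2 * p) = -r := by rw [hr, hpdef]; field_simp; ring
  have hr0 : -r ≠ 0 := by rw [← hr']; positivity
  set X := mpow σprod r * σjoint * mpow σprod r with hX
  have hstar : ∀ t, star (mpow σprod t) = mpow σprod t := fun t => TLLB.matFun_herm hP.1 _
  have hXp : X.PosSemidef := by
    have := hJ.mul_mul_conjTranspose_same (mpow σprod r)
    rwa [← star_eq_conjTranspose, hstar] at this
  set Pr := matFun (fun x : ℝ => if x = 0 then (0 : ℝ) else 1) σprod with hPr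
  have hp1 : mpow σprod (-r) * mpow σprod r = Pr := by
    have := TLLB.mpow_mul hP hr0
    rwa [neg_neg] at this
  have hp2 : mpow σprod r * mpow σprod (-r) = Pr := TLLB.mpow_mul hP (by simpa using hr0)
  have hJP : σjoint * Pr = σjoint := TLLB.mul_proj hP hsupp
  have hPJ : Pr * σjoint = σjoint := by
    have := congrArg star hJP
    rw [star_mul, TLLB.matFun_herm hP.1] at this
    rwa [show star σjoint = σjoint from hJ.1] at this
  have hrec : mpow σprod (-r) * X * mpow σprod (-r) = σjoint := by
    calc _ = (mpow σprod (-r) * mpow σprod r) * σjoint * (mpow σprod r * mpow σprod (-r)) := by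
          rw [hX]; simp only [mul_assoc]
      _ = σjoint := by rw [hp1, hp2, hPJ, hJP]
  have hemp : Matrix.trace (L * σjoint) =
      Matrix.trace (mpow σprod (-r) * L * mpow σprod (-r) * X) := by
    rw [← hrec, ← mul_assoc, trace_mul_comm]; simp only [mul_assoc]
  have key := TLLB.interp (TLLB.unit_eig hP.1) (TLLB.unit_eig hL.1) (TLLB.unit_eig hXp.1)
    hP.1.eigenvalues hL.1.eigenvalues hXp.1.eigenvalues hP.eigenvalues_nonneg
    hL.eigenvalues_nonneg hXp.eigenvalues_nonneg γ p hp hpq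
  have eL := (TLLB.matFun_eq hL.1 (fun x => x)).symm.trans (TLLB.matFun_id hL.1)
  have eP := (TLLB.matFun_eq hP.1 (fun x => x)).symm.trans (TLLB.matFun_id hP.1)
  have eX := (TLLB.matFun_eq hXp.1 (fun x => x)).symm.trans (TLLB.matFun_id hXp.1)
  have eS := TLLB.matFun_eq hP.1 (fun x => x ^ (-r))
  rw [hr', ← eS, eL, eP, eX] at key
  change ‖trace (mpow σprod (-r) * L * mpow σprod (-r) * X)‖ ≤ _ at key
  rw [← hemp] at key
  set T := ∑ i, hXp.1.eigenvalues i ^ γ with hT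
  have hT0 : 0 ≤ T := Finset.sum_nonneg fun i _ => Real.rpow_nonneg (hXp.eigenvalues_nonneg i) _
  have hTtr : (Matrix.trace (mpow X γ)).re = T := by
    unfold mpow
    rw [TLLB.matFun_eq hXp.1, TLLB.trace_DD (TLLB.unit_eig hXp.1), Complex.re_sum]
    simp [hT]
  -- moment bound
  set Q := (trace (TLLB.DD (hL.1.eigenvectorUnitary : Matrix d d ℂ)
    (fun i => ((hL.1.eigenvalues i ^ p : ℝ) : ℂ)) * σprod)).re with hQ
  have hQ0 : 0 ≤ Q := by
    have := TLLB.trace_mono (U := (hL.1.eigenvectorUnitary : Matrix d d ℂ)) hP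
      (g := fun _ => 0) (h := fun i => hL.1.eigenvalues i ^ p)
      (fun i => Real.rpow_nonneg (hL.eigenvalues_nonneg i) _)
    rw [trace_mul_comm σprod, trace_mul_comm σprod] at this
    simpa [hQ, TLLB.DD] using this
  have hQle : Q ≤ Real.exp (p * c + p ^ 2 * α ^ 2 / 2) := by
    have h1 := hSG p
    rw [TLLB.mexp_affine hL.1, TLLB.matFun_eq hL.1] at h1
    have h2 := TLLB.trace_mono (U := (hL.1.eigenvectorUnitary : Matrix d d ℂ)) hP
      (g := fun i => hL.1.eigenvalues i ^ p)
      (h := fun i => Real.exp (p * c) * Real.exp (p * (hL.1.eigenvalues i - c))) (fun i => by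
        have h0 := hL.eigenvalues_nonneg i
        rw [← Real.exp_add]
        calc _ ≤ (Real.exp (hL.1.eigenvalues i)) ^ p := by
              gcongr
              linarith [Real.add_one_le_exp (hL.1.eigenvalues i)]
          _ = _ := by rw [← Real.exp_mul]; congr 1; ring)
    rw [trace_mul_comm σprod] at h2
    have h3 : (trace (σprod * TLLB.DD (hL.1.eigenvectorUnitary : Matrix d d ℂ) (fun i =>
        ((Real.exp (p * c) * Real.exp (p * (hL.1.eigenvalues i - c)) : ℝ) : ℂ)))).re =
        Real.exp (p * c) * (trace (TLLB.DD (hL.1.eigenvectorUnitary : Matrix d d ℂ) (fun i =>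
        ((Real.exp (p * (hL.1.eigenvalues i - c)) : ℝ) : ℂ)) * σprod)).re := by
      rw [trace_mul_comm _ σprod, TLLB.trace_mul_DD, TLLB.trace_mul_DD, Complex.re_sum,
        Complex.re_sum, Finset.mul_sum]
      refine Finset.sum_congr rfl fun i _ => ?_
      rw [Complex.re_mul_ofReal, Complex.re_mul_ofReal]
      ring
    rw [h3] at h2
    rw [Real.exp_add]
    exact h2.trans (mul_le_mul_of_nonneg_left h1 (Real.exp_pos _).le)
  have hQ1 : Q ^ (1 / p) ≤ Real.exp (c + γ * α ^ 2 / (2 * (γ - 1))) := by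
    calc _ ≤ (Real.exp (p * c + p ^ 2 * α ^ 2 / 2)) ^ (1 / p) := by gcongr
      _ = _ := by
        rw [← Real.exp_mul]; congr 1
        have : γ * α ^ 2 / (2 * (γ - 1)) = p * α ^ 2 / 2 := by rw [hpdef]; field_simp
        rw [this]; field_simp
  have hle : (Matrix.trace (L * σjoint)).re ≤
      T ^ (1 / γ) * Real.exp (c + γ * α ^ 2 / (2 * (γ - 1))) :=
    (Complex.re_le_norm _).trans (key.trans
      (mul_le_mul_of_nonneg_left hQ1 (Real.rpow_nonneg hT0 _)))
  rcases hT0.eq_or_lt with h0 | hTpos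
  · rw [← h0, Real.zero_rpow (by positivity), zero_mul] at hle
    exact (mul_nonpos_of_nonpos_of_nonneg hle (Real.exp_pos _).le).trans (Real.exp_pos _).le
  · have hD : (γ - 1) / γ * sandwichedRenyi γ σjoint σprod = Real.log T * (1 / γ) := by
      unfold sandwichedRenyi
      rw [← hr, ← hX, hTtr]; field_simp
    rw [hD]
    refine (mul_le_mul_of_nonneg_right hle (Real.exp_pos _).le).trans (le_of_eq ?_)
    rw [Real.rpow_def_of_pos hTpos, ← Real.exp_add, ← Real.exp_add]
    congr 1
    ring
end

section
/- Type-counting stability bound: for a permutation-invariant family of channels (N^{(s)}) on inputs indexed by sequences s ∈ Z^n over an alphabet Z of size |Z| (i.e., N^{(s)}(ρ_s) depends only on the type of s), the Holevo information between the input S and the output satisfies I[S; B] ≤ (|Z| − 1) ln(n + 1). -/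
open Matrix
open scoped ComplexOrder

variable {d : Type*} [Fintype d] [DecidableEq d]

/-- Number of occurrences of the symbol `z` in the sequence `s` (entry of the type vector). -/
def typeCount {Z : Type*} [DecidableEq Z] {n : ℕ} (s : Fin n → Z) (z : Z) : ℕ :=
  (Finset.univ.filter fun i => s i = z).card

lemma aux_scalar {d : Type*} [Fintype d] [DecidableEq d] (W : Matrix d d ℂ) (a b : d → ℝ) (p : ℝ) (hp : 0 < p)
    (ha : ∀ i, 0 ≤ a i) (ha1 : ∑ i, a i = 1) (hb : ∀ i, 0 ≤ b i)
    (hW : ∀ i, ∑ j, ‖W j i‖ ^ 2 = 1)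
    (hx : ∀ (i : d) (x : d → ℂ), p * (a i * ‖∑ j, star (x j) * W j i‖ ^ 2) ≤ ∑ j, b j * ‖x j‖ ^ 2) :
    ∑ i, ∑ j, a i * ‖W j i‖ ^ 2 * (Real.log (a i) - Real.log (b j)) ≤ - Real.log p := by
  have key : ∀ i, ∑ j, a i * ‖W j i‖ ^ 2 * (Real.log (a i) - Real.log (b j)) ≤ a i * (- Real.log p) := by
    intro i
    rcases (ha i).eq_or_lt with h0 | h0
    · simp [← h0]
    have hpa : 0 < p * a i := mul_pos hp h0
    have hz : ∀ j, b j = 0 → ‖W j i‖ ^ 2 = 0 := by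
      intro j hj
      have := hx i (Pi.single j 1)
      have e1 : ∑ k, star ((Pi.single j 1 : d → ℂ) k) * W k i = W j i := by
        rw [Finset.sum_eq_single j]
        · simp
        · intro k _ hk; simp [hk]
        · simp
      have e2 : ∑ k, b k * ‖(Pi.single j 1 : d → ℂ) k‖ ^ 2 = 0 := by
        rw [Finset.sum_eq_single j]
        · simp [hj]
        · intro k _ hk; simp [hk]
        · simp
      rw [e1, e2, ← mul_assoc] at this
      have h3 : 0 ≤ ‖W j i‖ ^ 2 := by positivity
      nlinarith
    set c := ∑ j, ‖W j i‖ ^ 2 / b j with hc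
    have hc0 : 0 ≤ c := Finset.sum_nonneg fun j _ => div_nonneg (by positivity) (hb j)
    have hc1 : p * a i * c ≤ 1 := by
      have := hx i (fun j => W j i / (b j : ℂ))
      have e1 : ∑ k, star (W k i / (b k : ℂ)) * W k i = (c : ℂ) := by
        rw [hc]; push_cast
        refine Finset.sum_congr rfl fun k _ => ?_
        have : star (W k i) * W k i = (‖W k i‖ : ℂ) ^ 2 := Complex.conj_mul' _
        rw [star_div₀, ← this]
        have : star (b k : ℂ) = b k := Complex.conj_ofReal _
        rw [this]; ring
      have e2 : ∑ k, b k * ‖W k i / (b k : ℂ)‖ ^ 2 = c := by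
        refine Finset.sum_congr rfl fun k _ => ?_
        rw [norm_div, Complex.norm_real, Real.norm_eq_abs, abs_of_nonneg (hb k)]
        by_cases h : b k = 0
        · simp [h]
        · field_simp
      simp only [e1, e2, Complex.norm_real, Real.norm_eq_abs, sq_abs] at this
      rcases hc0.eq_or_lt with h | h
      · rw [← h]; simp
      · by_contra hcon
        push Not at hcon
        nlinarith
    have hterm : ∀ j, ‖W j i‖ ^ 2 * (Real.log (p * a i) - Real.log (b j)) ≤
        p * a i * (‖W j i‖ ^ 2 / b j) - ‖W j i‖ ^ 2 := by
      intro j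
      rcases (hb j).eq_or_lt with h | h
      · simp [hz j h.symm]
      · have := Real.log_le_sub_one_of_pos (div_pos hpa h)
        rw [Real.log_div hpa.ne' h.ne'] at this
        have h3 : 0 ≤ ‖W j i‖ ^ 2 := by positivity
        calc _ ≤ ‖W j i‖ ^ 2 * (p * a i / b j - 1) := mul_le_mul_of_nonneg_left this h3
          _ = _ := by ring
    have hs := Finset.sum_le_sum fun j (_ : j ∈ Finset.univ) => hterm j
    rw [Finset.sum_sub_distrib, ← Finset.mul_sum, hW i, ← hc, Real.log_mul hp.ne' h0.ne'] at hs
    have e : ∑ j, ‖W j i‖ ^ 2 * (Real.log p + Real.log (a i) - Real.log (b j)) =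
        Real.log p + ∑ j, ‖W j i‖ ^ 2 * (Real.log (a i) - Real.log (b j)) := by
      have e0 : ∑ j, Real.log p * ‖W j i‖ ^ 2 = Real.log p := by
        rw [← Finset.mul_sum, hW i, mul_one]
      conv_rhs => rw [← e0]
      rw [← Finset.sum_add_distrib]
      exact Finset.sum_congr rfl fun k _ => by ring
    rw [e] at hs
    simp only [mul_assoc]
    rw [← Finset.mul_sum]
    exact mul_le_mul_of_nonneg_left (by linarith) h0.le
  calc _ ≤ ∑ i, a i * (- Real.log p) := Finset.sum_le_sum fun i _ => key i
    _ = _ := by rw [← Finset.sum_mul, ha1, one_mul]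

lemma aux_rel {d : Type*} [Fintype d] [DecidableEq d] (ρ σ : Matrix d d ℂ) (hρ : IsDensity ρ) (hσ : σ.PosSemidef) (p : ℝ)
    (hp : 0 < p) (h : (σ - p • ρ).PosSemidef) : qRelEnt ρ σ ≤ - Real.log p := by
  obtain ⟨hρ, hρ1⟩ := hρ
  have hA := hρ.isHermitian
  have hB := hσ.isHermitian
  set V : Matrix d d ℂ := (hA.eigenvectorUnitary : Matrix d d ℂ) with hV
  set U : Matrix d d ℂ := (hB.eigenvectorUnitary : Matrix d d ℂ) with hU
  have hVV : star V * V = 1 := Unitary.coe_star_mul_self hA.eigenvectorUnitary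
  have hUU : star U * U = 1 := Unitary.coe_star_mul_self hB.eigenvectorUnitary
  have hUU' : U * star U = 1 := Unitary.coe_mul_star_self hB.eigenvectorUnitary
  set a := hA.eigenvalues with hadef
  set b := hB.eigenvalues with hbdef
  have eρ : ρ = V * diagonal (fun i => (a i : ℂ)) * star V := by
    conv_lhs => rw [hA.spectral_theorem]
    rfl
  have eσ : σ = U * diagonal (fun i => (b i : ℂ)) * star U := by
    conv_lhs => rw [hB.spectral_theorem]
    rfl
  have lρ : mlog ρ = V * diagonal (fun i => (Real.log (a i) : ℂ)) * star V := by
    simp only [mlog, matFun, dif_pos hA]; rfl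
  have lσ : mlog σ = U * diagonal (fun i => (Real.log (b i) : ℂ)) * star U := by
    simp only [mlog, matFun, dif_pos hB]; rfl
  set W := star U * V with hWdef
  have hWW : star W * W = 1 := by
    rw [hWdef, star_mul, star_star, mul_assoc, ← mul_assoc U, hUU', one_mul, hVV]
  have hW : ∀ i, ∑ j, ‖W j i‖ ^ 2 = 1 := by
    intro i
    have := congrFun (congrFun hWW i) i
    rw [Matrix.mul_apply, Matrix.one_apply_eq] at this
    have h2 : ((∑ j, ‖W j i‖ ^ 2 : ℝ) : ℂ) = 1 := by
      rw [← this]; push_cast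
      exact Finset.sum_congr rfl fun j _ => (Complex.conj_mul' _).symm
    exact_mod_cast h2
  have ha1 : ∑ i, a i = 1 := by
    have := hA.trace_eq_sum_eigenvalues
    rw [hρ1] at this
    have h2 : ((∑ i, a i : ℝ) : ℂ) = 1 := by rw [this]; push_cast; rfl
    exact_mod_cast h2
  have t1 : trace (ρ * mlog ρ) = ((∑ i, a i * Real.log (a i) : ℝ) : ℂ) := by
    rw [lρ]
    conv_lhs => rw [eρ]
    have : V * diagonal (fun i => (a i : ℂ)) * star V * (V * diagonal (fun i => (Real.log (a i) : ℂ)) * star V)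
      = V * (diagonal (fun i => (a i : ℂ)) * diagonal (fun i => (Real.log (a i) : ℂ))) * star V := by
      simp only [mul_assoc]
      rw [← mul_assoc (star V) V, hVV, one_mul]
    rw [this, Matrix.trace_mul_comm, ← mul_assoc, hVV, one_mul, diagonal_mul_diagonal, trace_diagonal]
    push_cast; rfl
  have t2 : trace (ρ * mlog σ) = ((∑ i, ∑ j, a i * ‖W j i‖ ^ 2 * Real.log (b j) : ℝ) : ℂ) := by
    rw [lσ]
    conv_lhs => rw [eρ]
    have : trace (V * diagonal (fun i => (a i : ℂ)) * star V * (U * diagonal (fun i => (Real.log (b i) : ℂ)) * star U))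
      = trace (diagonal (fun i => (a i : ℂ)) * (star W * (diagonal (fun i => (Real.log (b i) : ℂ)) * W))) := by
      rw [mul_assoc, mul_assoc, Matrix.trace_mul_comm, hWdef, star_mul, star_star]
      simp only [mul_assoc]
    rw [this]
    simp only [trace, diag_apply, diagonal_mul, Matrix.mul_apply (M := star W)]
    push_cast
    refine Finset.sum_congr rfl fun i _ => ?_
    rw [Finset.mul_sum]
    refine Finset.sum_congr rfl fun j _ => ?_
    rw [← Complex.conj_mul']
    have : (star W) i j = (starRingEnd ℂ) (W j i) := rfl
    rw [this]; ring
  have hx : ∀ (i : d) (x : d → ℂ), p * (a i * ‖∑ j, star (x j) * W j i‖ ^ 2) ≤ ∑ j, b j * ‖x j‖ ^ 2 := by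
    intro i x
    have hc : (star U * (σ - p • ρ) * U).PosSemidef := h.conjTranspose_mul_mul_same U
    have ec : star U * (σ - p • ρ) * U = diagonal (fun i => (b i : ℂ)) -
        p • (W * diagonal (fun i => (a i : ℂ)) * star W) := by
      have e1 : star U * σ * U = diagonal (fun i => (b i : ℂ)) := by
        conv_lhs => rw [eσ]
        simp only [mul_assoc]
        rw [hUU, mul_one, ← mul_assoc, hUU, one_mul]
      have e2 : star U * ρ * U = W * diagonal (fun i => (a i : ℂ)) * star W := by
        conv_lhs => rw [eρ]
        rw [hWdef, star_mul, star_star]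
        simp only [mul_assoc]
      rw [mul_sub, sub_mul, e1, Matrix.mul_smul, Matrix.smul_mul, e2]
    rw [ec] at hc
    have h1 := hc.dotProduct_mulVec_nonneg x
    have q1 : star x ⬝ᵥ (diagonal (fun i => (b i : ℂ)) *ᵥ x) = ((∑ j, b j * ‖x j‖ ^ 2 : ℝ) : ℂ) := by
      simp only [dotProduct, mulVec_diagonal]
      push_cast
      refine Finset.sum_congr rfl fun j _ => ?_
      rw [← Complex.conj_mul']
      have : (star x) j = (starRingEnd ℂ) (x j) := rfl
      rw [this]; ring
    have q2 : star x ⬝ᵥ ((W * diagonal (fun i => (a i : ℂ)) * star W) *ᵥ x) =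
        ((∑ i, a i * ‖∑ j, star (x j) * W j i‖ ^ 2 : ℝ) : ℂ) := by
      rw [mul_assoc, ← mulVec_mulVec, dotProduct_mulVec, ← mulVec_mulVec]
      simp only [dotProduct, mulVec_diagonal]
      push_cast
      refine Finset.sum_congr rfl fun k _ => ?_
      rw [← Complex.mul_conj']
      have r1 : (star x ᵥ* W) k = ∑ j, star (x j) * W j k := rfl
      have r2 : (star W *ᵥ x) k = (starRingEnd ℂ) (∑ j, star (x j) * W j k) := by
        rw [map_sum]
        simp [mulVec, dotProduct, mul_comm]
      rw [r1, r2]; ring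
    rw [sub_mulVec, dotProduct_sub, smul_mulVec, dotProduct_smul, q1, q2, Complex.real_smul, ← Complex.ofReal_mul,
      ← Complex.ofReal_sub] at h1
    have h2 : 0 ≤ (∑ j, b j * ‖x j‖ ^ 2) - p * ∑ i, a i * ‖∑ j, star (x j) * W j i‖ ^ 2 := by
      exact_mod_cast h1
    have h3 : a i * ‖∑ j, star (x j) * W j i‖ ^ 2 ≤ ∑ i, a i * ‖∑ j, star (x j) * W j i‖ ^ 2 :=
      Finset.single_le_sum (f := fun i => a i * ‖∑ j, star (x j) * W j i‖ ^ 2)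
        (fun k _ => mul_nonneg (hρ.eigenvalues_nonneg k) (by positivity)) (Finset.mem_univ i)
    have := mul_le_mul_of_nonneg_left h3 hp.le
    linarith
  have := aux_scalar W a b p hp hρ.eigenvalues_nonneg ha1 hσ.eigenvalues_nonneg hW hx
  have e : qRelEnt ρ σ = ∑ i, ∑ j, a i * ‖W j i‖ ^ 2 * (Real.log (a i) - Real.log (b j)) := by
    rw [qRelEnt, mul_sub, trace_sub, t1, t2, ← Complex.ofReal_sub, Complex.ofReal_re,
      ← Finset.sum_sub_distrib]
    refine Finset.sum_congr rfl fun i _ => ?_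
    simp only [mul_sub]
    rw [Finset.sum_sub_distrib]
    congr 1
    rw [← Finset.sum_mul, ← Finset.mul_sum, hW i, mul_one]
  rw [e]; exact this

lemma aux_count {Z : Type*} [Fintype Z] [DecidableEq Z] {n : ℕ} (s : Fin n → Z) :
    ∑ z, typeCount s z = n := by
  have := Finset.card_eq_sum_card_fiberwise (f := s) (s := Finset.univ) (t := Finset.univ) (by simp)
  simpa [typeCount] using this.symm

/-- Type-counting stability bound: for a permutation-invariant family of
channels on length-`n` inputs over an alphabet `Z` (the output state `out s` depends only on
the type of `s`), the Holevo information `I[S;B] = Σ_s P(s) D(out s ‖ Σ_{s'} P(s') out s')`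
between the input and the output is at most `(|Z| − 1) ln(n + 1)`. -/
theorem type_counting_stability_bound
    {Z : Type*} [Fintype Z] [DecidableEq Z] [Nonempty Z] {n : ℕ}
    (P : (Fin n → Z) → ℝ) (hP0 : ∀ s, 0 ≤ P s) (hP1 : ∑ s, P s = 1)
    (out : (Fin n → Z) → Matrix d d ℂ) (hout : ∀ s, IsDensity (out s))
    (hperm : ∀ s s' : Fin n → Z, (∀ z, typeCount s z = typeCount s' z) → out s = out s') :
    ∑ s, P s * qRelEnt (out s) (∑ s', P s' • out s') ≤
      ((Fintype.card Z : ℝ) - 1) * Real.log (n + 1) := by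
  obtain ⟨z0⟩ := ‹Nonempty Z›
  let f : (Fin n → Z) → ({z : Z // z ≠ z0} → Fin (n + 1)) := fun s z =>
    ⟨typeCount s z, Nat.lt_succ_of_le ((Finset.card_le_univ _).trans (by simp))⟩
  have hf : ∀ s s', f s = f s' → out s = out s' := by
    intro s s' h
    apply hperm
    have h1 : ∀ z, z ≠ z0 → typeCount s z = typeCount s' z := fun z hz =>
      congrArg Fin.val (congrFun h ⟨z, hz⟩)
    intro z
    by_cases hz : z = z0
    · subst hz
      have c1 := aux_count s
      have c2 := aux_count s'
      rw [← Finset.add_sum_erase _ _ (Finset.mem_univ z)] at c1 c2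
      have : ∑ x ∈ Finset.univ.erase z, typeCount s x = ∑ x ∈ Finset.univ.erase z, typeCount s' x :=
        Finset.sum_congr rfl fun x hx => h1 x (Finset.ne_of_mem_erase hx)
      omega
    · exact h1 z hz
  set M : ℝ := ((n : ℝ) + 1) ^ (Fintype.card Z - 1) with hM
  have hM0 : 0 < M := by positivity
  have hMcard : (Fintype.card ({z : Z // z ≠ z0} → Fin (n + 1)) : ℝ) = M := by
    rw [Fintype.card_fun, Fintype.card_fin, Fintype.card_subtype_compl, Fintype.card_subtype_eq]
    push_cast; rfl
  have hlogM : Real.log M = ((Fintype.card Z : ℝ) - 1) * Real.log (n + 1) := by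
    rw [hM, Real.log_pow, Nat.cast_sub (Fintype.card_pos_iff.mpr ⟨z0⟩), Nat.cast_one]
  rw [← hlogM]
  set σ := ∑ s', P s' • out s' with hσ
  have hpsd : ∀ s, (P s • out s).PosSemidef := fun s => (hout s).1.smul (hP0 s)
  have hσp : σ.PosSemidef := Matrix.posSemidef_sum _ fun s _ => hpsd s
  let w : ({z : Z // z ≠ z0} → Fin (n + 1)) → ℝ := fun t => ∑ s' with f s' = t, P s'
  have hw0 : ∀ t, 0 ≤ w t := fun t => Finset.sum_nonneg fun s _ => hP0 s
  have hwP : ∀ s, P s ≤ w (f s) := fun s =>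
    Finset.single_le_sum (f := P) (fun k _ => hP0 k) (by simp)
  have hterm : ∀ s, P s * qRelEnt (out s) σ ≤ P s * Real.log M + (P s / w (f s) / M - P s) := by
    intro s
    rcases (hP0 s).eq_or_lt with h | h
    · simp [← h]
    have hw : 0 < w (f s) := h.trans_le (hwP s)
    have hle : (σ - w (f s) • out s).PosSemidef := by
      have e1 : w (f s) • out s = ∑ s' with f s' = f s, P s' • out s' := by
        simp only [w]
        rw [Finset.sum_smul]
        refine Finset.sum_congr rfl fun k hk => ?_
        rw [hf k s (by simpa using hk)]
      rw [e1, hσ, ← Finset.sum_filter_add_sum_filter_not Finset.univ (fun s' => f s' = f s),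
        add_sub_cancel_left]
      exact Matrix.posSemidef_sum _ fun s _ => hpsd s
    have h1 := aux_rel (out s) σ (hout s) hσp _ hw hle
    have h2 := Real.log_le_sub_one_of_pos (inv_pos.mpr (mul_pos hw hM0))
    rw [Real.log_inv, Real.log_mul hw.ne' hM0.ne'] at h2
    calc _ ≤ P s * (Real.log M + ((w (f s) * M)⁻¹ - 1)) :=
          mul_le_mul_of_nonneg_left (by linarith) h.le
      _ = _ := by rw [mul_inv]; ring
  have hcount : ∑ s, P s / w (f s) ≤ M := by
    rw [← hMcard, ← Finset.sum_fiberwise Finset.univ f]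
    calc _ ≤ ∑ t : ({z : Z // z ≠ z0} → Fin (n + 1)), (1 : ℝ) := by
          refine Finset.sum_le_sum fun t _ => ?_
          have : ∑ s with f s = t, P s / w (f s) = w t / w t := by
            rw [show w t / w t = (∑ s' with f s' = t, P s') / w t from rfl, Finset.sum_div]
            refine Finset.sum_congr rfl fun k hk => ?_
            rw [show f k = t by simpa using hk]
          rw [this]; exact div_self_le_one _
      _ = _ := by simp
  calc _ ≤ ∑ s, (P s * Real.log M + (P s / w (f s) / M - P s)) := Finset.sum_le_sum fun s _ => hterm s
    _ = Real.log M + ((∑ s, P s / w (f s)) / M - 1) := by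
      rw [Finset.sum_add_distrib, Finset.sum_sub_distrib, ← Finset.sum_mul, hP1, ← Finset.sum_div, one_mul]
    _ ≤ _ := by
      have := (div_le_one hM0).mpr hcount
      linarith
end
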